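/- Let μ ∈ M¹₊(Ω) and let μ* be its reduced measure. Then there exists a Borel set E ⊂ Ω with H^N(E) = 0 (H^N being the N-dimensional Hausdorff measure on ℝ^N) such that (μ − μ*)(Eᶜ) = 0, i.e., μ(A) = μ*(A) for every Borel set A ⊂ Ω ∖ E. In other words, μ and μ* differ only on a set of zero N-dimensional Hausdorff measure. -/

import Mathlib

open MeasureTheory Set Filter Topology
open scoped ENNReal NNReal

noncomputable section

/-- Euclidean space `ℝ^N`. -/
abbrev Euc (N : ℕ) : Type := EuclideanSpace ℝ (Fin N)

/-- `ρ(x) = dist(x, ∂Ω)`, realized as the distance from `x` to the complement of `Ω`. -/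
def rho {N : ℕ} (Ω : Set (Euc N)) (x : Euc N) : ℝ := Metric.infDist x Ωᶜ

/-- The Laplacian (in the space variable) of `f : ℝ^N → ℝ`. -/
def lap {N : ℕ} (f : Euc N → ℝ) (x : Euc N) : ℝ :=
  ∑ i : Fin N, fderiv ℝ (fun y => fderiv ℝ f y (EuclideanSpace.single i 1)) x
    (EuclideanSpace.single i 1)

/-- The parabolic cylinder `Q_T = Ω × (0,T)`. -/
def QT {N : ℕ} (Ω : Set (Euc N)) (T : ℝ) : Set (Euc N × ℝ) := Ω ×ˢ Ioo 0 T

/-- `∂_t ζ + Δ ζ` for a function `ζ(x,t)` (curried). -/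
def heatAdj {N : ℕ} (ζ : Euc N → ℝ → ℝ) (p : Euc N × ℝ) : ℝ :=
  deriv (ζ p.1) p.2 + lap (fun y => ζ y p.2) p.1

/-- `C^{2,1}` regularity: `ζ`, `∂_t ζ`, `∇_x ζ` and `D²_x ζ` exist and are continuous. -/
def C21 {N : ℕ} (ζ : Euc N → ℝ → ℝ) : Prop :=
  Continuous (fun p : Euc N × ℝ => ζ p.1 p.2) ∧
  (∀ (x : Euc N) (t : ℝ), DifferentiableAt ℝ (ζ x) t) ∧
  Continuous (fun p : Euc N × ℝ => deriv (ζ p.1) p.2) ∧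
  (∀ (t : ℝ) (x : Euc N), DifferentiableAt ℝ (fun y => ζ y t) x) ∧
  Continuous (fun p : Euc N × ℝ => fderiv ℝ (fun y => ζ y p.2) p.1) ∧
  (∀ (t : ℝ) (x : Euc N), DifferentiableAt ℝ (fun y => fderiv ℝ (fun z => ζ z t) y) x) ∧
  Continuous (fun p : Euc N × ℝ => fderiv ℝ (fun y => fderiv ℝ (fun z => ζ z p.2) y) p.1)

/-- Membership in `C^{2,1}_{ℓ,0}(Q̄_T)` : `C^{2,1}` regularity together with
vanishing on `∂Ω × [0,T] ∪ Ω̄ × {T}`. -/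
def TestZero {N : ℕ} (Ω : Set (Euc N)) (T : ℝ) (ζ : Euc N → ℝ → ℝ) : Prop :=
  C21 ζ ∧ (∀ x ∈ frontier Ω, ∀ t ∈ Icc (0:ℝ) T, ζ x t = 0) ∧
  (∀ x ∈ closure Ω, ζ x T = 0)

/-- `g : ℝ → ℝ` continuous, nondecreasing and vanishing on `(-∞,0]`. -/
def GoodG (g : ℝ → ℝ) : Prop := Continuous g ∧ Monotone g ∧ ∀ r : ℝ, r ≤ 0 → g r = 0

/-- `μ ∈ M¹₊(Ω)` : a positive Radon measure on `Ω` with `∫_Ω ρ dμ < ∞`. -/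
def MemM1 {N : ℕ} (Ω : Set (Euc N)) (μ : Measure (Euc N)) : Prop :=
  μ Ωᶜ = 0 ∧ (∀ K : Set (Euc N), K ⊆ Ω → IsCompact K → μ K < ⊤) ∧
  (∫⁻ x, ENNReal.ofReal (rho Ω x) ∂μ) < ⊤

/-- A positive Radon measure on the (open) set `U`. -/
def RadonOn {N : ℕ} (U : Set (Euc N)) (ν : Measure (Euc N)) : Prop :=
  ν Uᶜ = 0 ∧ ∀ K : Set (Euc N), K ⊆ U → IsCompact K → ν K < ⊤

/-- Weak solution of `(P_μ)` : `∂_t u - Δu + g(u) = 0` in `Q_T`, `u = 0` on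
`∂Ω × (0,T)`, `u(·,0) = μ`. -/
def WeakSol {N : ℕ} (Ω : Set (Euc N)) (T : ℝ) (g : ℝ → ℝ) (μ : Measure (Euc N))
    (u : Euc N × ℝ → ℝ) : Prop :=
  IntegrableOn u (QT Ω T) ∧
  IntegrableOn (fun p => g (u p) * rho Ω p.1) (QT Ω T) ∧
  ∀ ζ : Euc N → ℝ → ℝ, TestZero Ω T ζ →
    (∫ p in QT Ω T,
      (-(u p) * deriv (ζ p.1) p.2 - u p * lap (fun y => ζ y p.2) p.1 + ζ p.1 p.2 * g (u p)))
      = ∫ x, ζ x 0 ∂μ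

/-- Weak subsolution of `(P_μ)`. -/
def WeakSubSol {N : ℕ} (Ω : Set (Euc N)) (T : ℝ) (g : ℝ → ℝ) (μ : Measure (Euc N))
    (u : Euc N × ℝ → ℝ) : Prop :=
  IntegrableOn u (QT Ω T) ∧
  IntegrableOn (fun p => g (u p) * rho Ω p.1) (QT Ω T) ∧
  ∀ ζ : Euc N → ℝ → ℝ, TestZero Ω T ζ → (∀ x t, 0 ≤ ζ x t) →
    (∫ p in QT Ω T,
      (-(u p) * deriv (ζ p.1) p.2 - u p * lap (fun y => ζ y p.2) p.1 + ζ p.1 p.2 * g (u p)))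
      ≤ ∫ x, ζ x 0 ∂μ

/-- `μ` is a good measure relative to `g` : `(P_μ)` admits a weak solution. -/
def GoodMeasure {N : ℕ} (Ω : Set (Euc N)) (T : ℝ) (g : ℝ → ℝ) (μ : Measure (Euc N)) : Prop :=
  ∃ u, WeakSol Ω T g μ u

/-- Essential limit of `F(t)` as `t → 0⁺` equals `L`. -/
def EssLimInit (F : ℝ → ℝ) (L : ℝ) : Prop :=
  Tendsto F ((𝓝[>] (0:ℝ)) ⊓ (ae (volume : Measure ℝ))) (𝓝 L)

/-- Essential limit of `F(t)` as `t → 0⁺` is `+∞`. -/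
def EssLimInitTop (F : ℝ → ℝ) : Prop :=
  Tendsto F ((𝓝[>] (0:ℝ)) ⊓ (ae (volume : Measure ℝ))) atTop

/-- `ν` is the initial trace of `u` on `U ⊆ Ω` : for every `φ ∈ C_c(U)`,
`ess lim_{t→0} ∫_Ω u(·,t) φ dx = ∫ φ dν`. -/
def InitTraceOn {N : ℕ} (Ω U : Set (Euc N)) (u : Euc N × ℝ → ℝ) (ν : Measure (Euc N)) : Prop :=
  ∀ φ : Euc N → ℝ, Continuous φ → HasCompactSupport φ → tsupport φ ⊆ U →
    EssLimInit (fun t => ∫ x in Ω, u (x, t) * φ x) (∫ x, φ x ∂ν)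

/-- `μstar` is the reduced measure of `μ` : the largest good measure `≤ μ`. -/
def IsReducedMeasure {N : ℕ} (Ω : Set (Euc N)) (T : ℝ) (g : ℝ → ℝ)
    (μ μstar : Measure (Euc N)) : Prop :=
  MemM1 Ω μstar ∧ μstar ≤ μ ∧ GoodMeasure Ω T g μstar ∧
  ∀ ν : Measure (Euc N), MemM1 Ω ν → GoodMeasure Ω T g ν → ν ≤ μ → ν ≤ μstar

/-- The `N`-dimensional Hausdorff measure on `ℝ^N`. -/
def hausN {N : ℕ} : Measure (Euc N) := MeasureTheory.Measure.hausdorffMeasure (N : ℝ)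

/-- finite difference approximation of `-∂_t - Δ` -/
def DL {N : ℕ} {D : Type*} [NormedAddCommGroup D] [NormedSpace ℝ D] (s : ℝ)
    (Z : Euc N × ℝ → D) (p : Euc N × ℝ) : D :=
  s⁻¹ • (Z p - Z (p.1, p.2 + s)) +
    ∑ l : Fin N, (s ^ 2)⁻¹ • ((2:ℝ) • Z p - Z (p.1 + s • EuclideanSpace.single l (1:ℝ), p.2)
      - Z (p.1 - s • EuclideanSpace.single l (1:ℝ), p.2))

theorem second_diff (φ φ' φ'' : ℝ → ℝ) (h1 : ∀ r, HasDerivAt φ (φ' r) r)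
    (h2 : ∀ r, HasDerivAt φ' (φ'' r) r) (s : ℝ) (hs : 0 < s) :
    ∃ ξ, |ξ| ≤ s ∧ (s ^ 2)⁻¹ * (2 * φ 0 - φ s - φ (-s)) = - φ'' ξ := by
  have hF : ∀ r, HasDerivAt (fun r => φ r + φ (-r)) (φ' r - φ' (-r)) r := by
    intro r
    have := (h1 (-r)).comp r (hasDerivAt_neg r)
    have h3 := (h1 r).add this
    exact h3.congr_deriv (by ring)
  have hG : ∀ r : ℝ, HasDerivAt (fun r : ℝ => r ^ 2) (2 * r) r := by
    intro r
    simpa using hasDerivAt_pow 2 r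
  obtain ⟨c, hc, hc2⟩ := exists_ratio_hasDerivAt_eq_ratio_slope (fun r => φ r + φ (-r))
    (fun r => φ' r - φ' (-r)) hs (fun r _ => (hF r).continuousAt.continuousWithinAt)
    (fun r _ => hF r) (fun r : ℝ => r ^ 2) (fun r => 2 * r)
    (fun r _ => (hG r).continuousAt.continuousWithinAt) (fun r _ => hG r)
  obtain ⟨ξ, hξ, hξ2⟩ := exists_hasDerivAt_eq_slope φ' φ'' (a := -c) (b := c) (by linarith [hc.1])
    (fun r _ => (h2 r).continuousAt.continuousWithinAt) (fun r _ => h2 r)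
  refine ⟨ξ, ?_, ?_⟩
  · rw [abs_le]; constructor <;> linarith [hξ.1, hξ.2, hc.1, hc.2]
  · have hc0 : c ≠ 0 := hc.1.ne'
    have hs0 : s ≠ 0 := hs.ne'
    rw [hξ2]
    simp only [neg_zero] at hc2
    field_simp
    field_simp at hc2
    have : (c + c) ≠ 0 := by intro h; apply hc0; linarith
    rw [sub_neg_eq_add]
    have h4 : s ^ 2 * (φ' c - φ' (-c)) = (φ s + φ (-s) - 2 * φ 0) * (2 * c) := by
      nlinarith [hc2]
    rw [eq_neg_iff_add_eq_zero]
    linarith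

theorem C21.line {N : ℕ} {ζ : Euc N → ℝ → ℝ} (h : C21 ζ) (t : ℝ) (x e : Euc N) :
    (∀ r : ℝ, HasDerivAt (fun r : ℝ => ζ (x + r • e) t)
      (fderiv ℝ (fun y => ζ y t) (x + r • e) e) r) ∧
    (∀ r : ℝ, HasDerivAt (fun r : ℝ => fderiv ℝ (fun y => ζ y t) (x + r • e) e)
      (fderiv ℝ (fun y => fderiv ℝ (fun z => ζ z t) y) (x + r • e) e e) r) := by
  obtain ⟨_, _, _, h4, _, h6, _⟩ := h
  have hl : ∀ r : ℝ, HasDerivAt (fun r : ℝ => x + r • e) e r := by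
    intro r
    simpa using ((hasDerivAt_id r).smul_const e).const_add x
  constructor
  · intro r
    exact (h4 t (x + r • e)).hasFDerivAt.comp_hasDerivAt r (hl r)
  · intro r
    have := (h6 t (x + r • e)).hasFDerivAt.comp_hasDerivAt r (hl r)
    exact ((ContinuousLinearMap.apply ℝ ℝ e).hasFDerivAt.comp_hasDerivAt r this)

theorem C21.lap_eq {N : ℕ} {ζ : Euc N → ℝ → ℝ} (h : C21 ζ) (t : ℝ) (x : Euc N) :
    lap (fun y => ζ y t) x = ∑ l : Fin N, fderiv ℝ (fun y => fderiv ℝ (fun z => ζ z t) y) x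
      (EuclideanSpace.single l 1) (EuclideanSpace.single l 1) := by
  obtain ⟨_, _, _, h4, _, h6, _⟩ := h
  unfold lap
  refine Finset.sum_congr rfl fun l _ => ?_
  rw [fderiv_clm_apply (h6 t x) (differentiableAt_const _)]
  simp

theorem C21.cont_heat {N : ℕ} {ζ : Euc N → ℝ → ℝ} (h : C21 ζ) : Continuous (heatAdj ζ) := by
  have : heatAdj ζ = fun p => deriv (ζ p.1) p.2 + ∑ l : Fin N,
      fderiv ℝ (fun y => fderiv ℝ (fun z => ζ z p.2) y) p.1
      (EuclideanSpace.single l 1) (EuclideanSpace.single l 1) := by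
    funext p
    rw [heatAdj, h.lap_eq]
  rw [this]
  obtain ⟨_, _, h3, h4, _, h6, h7⟩ := h
  refine h3.add (continuous_finsetSum _ fun l _ => ?_)
  exact (h7.clm_apply continuous_const).clm_apply continuous_const

theorem C21.consist {N : ℕ} {ζ : Euc N → ℝ → ℝ} (h : C21 ζ) (p : Euc N × ℝ) (s : ℝ) (hs : 0 < s) :
    ∃ (τ : ℝ) (ξ : Fin N → ℝ), |τ| ≤ s ∧ (∀ l, |ξ l| ≤ s) ∧
      DL s (fun p : Euc N × ℝ => ζ p.1 p.2) p = - deriv (ζ p.1) (p.2 + τ) - ∑ l : Fin N,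
      fderiv ℝ (fun y => fderiv ℝ (fun z => ζ z p.2) y)
        (p.1 + ξ l • EuclideanSpace.single l (1:ℝ))
      (EuclideanSpace.single l 1) (EuclideanSpace.single l 1) := by
  have hline := h.line
  obtain ⟨_, h2, _⟩ := h
  obtain ⟨c, hc, hc2⟩ := exists_hasDerivAt_eq_slope (ζ p.1) (deriv (ζ p.1)) (a := p.2)
    (b := p.2 + s) (by linarith) (fun r _ => (h2 p.1 r).continuousAt.continuousWithinAt)
    (fun r _ => (h2 p.1 r).hasDerivAt)
  have := fun l : Fin N => second_diff _ _ _ (hline p.2 p.1 (EuclideanSpace.single l (1:ℝ))).1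
    (hline p.2 p.1 (EuclideanSpace.single l (1:ℝ))).2 s hs
  choose ξ hξ hξ2 using this
  refine ⟨c - p.2, ξ, ?_, hξ, ?_⟩
  · rw [abs_le]; constructor <;> linarith [hc.1, hc.2]
  · unfold DL
    have e1 : p.2 + (c - p.2) = c := by ring
    rw [e1, hc2, sub_eq_add_neg (-_), ← Finset.sum_neg_distrib]
    congr 1
    · simp only [smul_eq_mul]
      rw [add_sub_cancel_left]
      field_simp
      ring
    · refine Finset.sum_congr rfl fun l _ => ?_
      rw [← hξ2 l]
      simp only [smul_eq_mul, zero_smul, add_zero, neg_smul, sub_eq_add_neg]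

/-- vector valued test functions together with their image under `-∂_t - Δ` -/
structure Nice {N : ℕ} {D : Type*} [NormedAddCommGroup D] [NormedSpace ℝ D]
    (Ω : Set (Euc N)) (T : ℝ) (Z W : Euc N × ℝ → D) : Prop where
  contZ : Continuous Z
  contW : Continuous W
  bdry : ∀ x ∈ frontier Ω, ∀ t ∈ Icc (0:ℝ) T, Z (x, t) = 0
  fin : ∀ x ∈ closure Ω, Z (x, T) = 0
  lim : ∀ p, Tendsto (fun s => DL s Z p) (𝓝[>] (0:ℝ)) (𝓝 (W p))
  bd : ∀ R : ℝ, ∃ C : ℝ, ∀ p ∈ Metric.closedBall (0 : Euc N × ℝ) R, ∀ s ∈ Ioc (0:ℝ) 1,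
    ‖DL s Z p‖ ≤ C

section
variable {N : ℕ} {D : Type*} [NormedAddCommGroup D] [NormedSpace ℝ D]

theorem DL_add (s : ℝ) (Z Z' : Euc N × ℝ → D) (p) : DL s (Z + Z') p = DL s Z p + DL s Z' p := by
  unfold DL
  rw [add_add_add_comm, ← Finset.sum_add_distrib]
  congr 1
  · simp only [Pi.add_apply]; module
  · refine Finset.sum_congr rfl fun l _ => ?_
    simp only [Pi.add_apply]; module

theorem DL_smul (s c : ℝ) (Z : Euc N × ℝ → D) (p) : DL s (c • Z) p = c • DL s Z p := by
  unfold DL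
  rw [smul_add, Finset.smul_sum]
  congr 1
  · simp only [Pi.smul_apply]; module
  · refine Finset.sum_congr rfl fun l _ => ?_
    simp only [Pi.smul_apply]; module

theorem DL_smul_const (s : ℝ) (ζ : Euc N × ℝ → ℝ) (d : D) (p) :
    DL s (fun p => ζ p • d) p = DL s ζ p • d := by
  unfold DL
  rw [add_smul, Finset.sum_smul]
  congr 1
  · simp only [smul_eq_mul]; module
  · refine Finset.sum_congr rfl fun l _ => ?_
    simp only [smul_eq_mul]; module

theorem DL_cont (s : ℝ) {Z : Euc N × ℝ → D} (h : Continuous Z) : Continuous (DL s Z) := by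
  unfold DL
  fun_prop

theorem Nice.add {Ω : Set (Euc N)} {T : ℝ} {Z W Z' W' : Euc N × ℝ → D} (h : Nice Ω T Z W)
    (h' : Nice Ω T Z' W') : Nice Ω T (Z + Z') (W + W') where
  contZ := h.contZ.add h'.contZ
  contW := h.contW.add h'.contW
  bdry x hx t ht := by simp [h.bdry x hx t ht, h'.bdry x hx t ht]
  fin x hx := by simp [h.fin x hx, h'.fin x hx]
  lim p := by
    simp only [DL_add]
    exact (h.lim p).add (h'.lim p)
  bd R := by
    obtain ⟨C, hC⟩ := h.bd R
    obtain ⟨C', hC'⟩ := h'.bd R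
    refine ⟨C + C', fun p hp s hs => ?_⟩
    rw [DL_add]
    exact (norm_add_le _ _).trans (add_le_add (hC p hp s hs) (hC' p hp s hs))

theorem Nice.smul {Ω : Set (Euc N)} {T : ℝ} {Z W : Euc N × ℝ → D} (h : Nice Ω T Z W)
    (c : ℝ) : Nice Ω T (c • Z) (c • W) where
  contZ := h.contZ.const_smul c
  contW := h.contW.const_smul c
  bdry x hx t ht := by simp [h.bdry x hx t ht]
  fin x hx := by simp [h.fin x hx]
  lim p := by
    simp only [DL_smul]
    exact (h.lim p).const_smul c
  bd R := by
    obtain ⟨C, hC⟩ := h.bd R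
    refine ⟨‖c‖ * C, fun p hp s hs => ?_⟩
    rw [DL_smul, norm_smul]
    exact mul_le_mul_of_nonneg_left (hC p hp s hs) (norm_nonneg _)

theorem Nice.zero {Ω : Set (Euc N)} {T : ℝ} : Nice Ω T (0 : Euc N × ℝ → D) 0 where
  contZ := continuous_const
  contW := continuous_const
  bdry x hx t ht := rfl
  fin x hx := rfl
  lim p := by
    have : (fun s => DL s (0 : Euc N × ℝ → D) p) = fun _ => 0 := by
      funext s; simp [DL]
    rw [this]; exact tendsto_const_nhds
  bd R := ⟨0, fun p hp s hs => by simp [DL]⟩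

theorem Nice.smul_const {Ω : Set (Euc N)} {T : ℝ} {Z W : Euc N × ℝ → ℝ} (h : Nice Ω T Z W)
    (d : D) : Nice Ω T (fun p => Z p • d) (fun p => W p • d) where
  contZ := h.contZ.smul continuous_const
  contW := h.contW.smul continuous_const
  bdry x hx t ht := by simp [h.bdry x hx t ht]
  fin x hx := by simp [h.fin x hx]
  lim p := by
    simp only [DL_smul_const]
    exact (h.lim p).smul_const d
  bd R := by
    obtain ⟨C, hC⟩ := h.bd R
    refine ⟨C * ‖d‖, fun p hp s hs => ?_⟩
    rw [DL_smul_const, norm_smul]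
    exact mul_le_mul_of_nonneg_right (hC p hp s hs) (norm_nonneg _)

theorem TestZero.nice {Ω : Set (Euc N)} {T : ℝ} {ζ : Euc N → ℝ → ℝ} (h : TestZero Ω T ζ) :
    Nice Ω T (fun p : Euc N × ℝ => ζ p.1 p.2) (fun p => - heatAdj ζ p) where
  contZ := h.1.1
  contW := h.1.cont_heat.neg
  bdry x hx t ht := h.2.1 x hx t ht
  fin x hx := h.2.2 x hx
  lim p := by
    have hc := h.1
    have hcc := hc
    obtain ⟨_, _, h3, _, _, _, h7⟩ := hcc
    have h7' : ∀ l : Fin N, Continuous fun p : Euc N × ℝ =>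
        fderiv ℝ (fun y => fderiv ℝ (fun z => ζ z p.2) y) p.1
      (EuclideanSpace.single l 1) (EuclideanSpace.single l 1) := fun l =>
        (h7.clm_apply continuous_const).clm_apply continuous_const
    have key : ∀ s : ℝ, ∃ (τ : ℝ) (ξ : Fin N → ℝ), |τ| ≤ |s| ∧ (∀ l, |ξ l| ≤ |s|) ∧ (0 < s →
      DL s (fun p : Euc N × ℝ => ζ p.1 p.2) p = - deriv (ζ p.1) (p.2 + τ) - ∑ l : Fin N,
      fderiv ℝ (fun y => fderiv ℝ (fun z => ζ z p.2) y)
        (p.1 + ξ l • EuclideanSpace.single l (1:ℝ))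
      (EuclideanSpace.single l 1) (EuclideanSpace.single l 1)) := by
      intro s
      by_cases hs : 0 < s
      · obtain ⟨τ, ξ, h1, h2, h3⟩ := hc.consist p s hs
        exact ⟨τ, ξ, h1.trans (le_abs_self s), fun l => (h2 l).trans (le_abs_self s), fun _ => h3⟩
      · exact ⟨0, 0, by simp, by simp, fun h => absurd h hs⟩
    choose τ ξ hτ hξ he using key
    have habs : Tendsto (fun s : ℝ => |s|) (𝓝[>] (0:ℝ)) (𝓝 0) := by
      have : Tendsto (fun s : ℝ => |s|) (𝓝 (0:ℝ)) (𝓝 |0|) := continuous_abs.tendsto 0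
      rw [abs_zero] at this
      exact this.mono_left nhdsWithin_le_nhds
    have hτ0 : Tendsto τ (𝓝[>] (0:ℝ)) (𝓝 0) := squeeze_zero_norm hτ habs
    have hξ0 : ∀ l, Tendsto (fun s => ξ s l) (𝓝[>] (0:ℝ)) (𝓝 0) := fun l =>
      squeeze_zero_norm (fun s => hξ s l) habs
    have e1 : Tendsto (fun s => deriv (ζ p.1) (p.2 + τ s)) (𝓝[>] (0:ℝ))
        (𝓝 (deriv (ζ p.1) p.2)) := by
      have := (h3.tendsto (p.1, p.2 + 0)).comp
        (tendsto_const_nhds.prodMk_nhds (tendsto_const_nhds.add hτ0))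
      simpa [Function.comp_def] using this
    have e2 : ∀ l, Tendsto (fun s => fderiv ℝ (fun y => fderiv ℝ (fun z => ζ z p.2) y)
        (p.1 + ξ s l • EuclideanSpace.single l (1:ℝ))
      (EuclideanSpace.single l 1) (EuclideanSpace.single l 1)) (𝓝[>] (0:ℝ))
        (𝓝 (fderiv ℝ (fun y => fderiv ℝ (fun z => ζ z p.2) y) p.1
      (EuclideanSpace.single l 1) (EuclideanSpace.single l 1))) := by
      intro l
      have := ((h7' l).tendsto (p.1 + (0:ℝ) • EuclideanSpace.single l (1:ℝ), p.2)).comp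
        ((tendsto_const_nhds.add ((hξ0 l).smul_const _)).prodMk_nhds tendsto_const_nhds)
      simpa [Function.comp_def] using this
    have e3 := e1.neg.sub (tendsto_finsetSum Finset.univ fun l _ => e2 l)
    rw [heatAdj, hc.lap_eq, neg_add, ← sub_eq_add_neg]
    refine e3.congr' ?_
    filter_upwards [self_mem_nhdsWithin] with s hs
    exact (he s hs).symm
  bd R := by
    have hc := h.1
    have hcc := hc
    obtain ⟨_, _, h3, _, _, _, h7⟩ := hcc
    have hK : IsCompact (Metric.closedBall (0 : Euc N × ℝ) (R + 1)) := isCompact_closedBall _ _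
    obtain ⟨C1, hC1⟩ := hK.exists_bound_of_continuousOn h3.continuousOn
    have h7' : ∀ l : Fin N, Continuous fun p : Euc N × ℝ =>
        fderiv ℝ (fun y => fderiv ℝ (fun z => ζ z p.2) y) p.1
      (EuclideanSpace.single l 1) (EuclideanSpace.single l 1) := fun l =>
        (h7.clm_apply continuous_const).clm_apply continuous_const
    choose C2 hC2 using fun l => hK.exists_bound_of_continuousOn (h7' l).continuousOn
    refine ⟨C1 + ∑ l, C2 l, fun p hp s hs => ?_⟩
    obtain ⟨τ, ξ, hτ, hξ, he⟩ := hc.consist p s hs.1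
    rw [mem_closedBall_zero_iff, Prod.norm_def, max_le_iff] at hp
    rw [he, sub_eq_add_neg]
    refine (norm_add_le _ _).trans (add_le_add ?_ ?_)
    · rw [norm_neg]
      refine hC1 (p.1, p.2 + τ) ?_
      rw [mem_closedBall_zero_iff, Prod.norm_def, max_le_iff]
      constructor
      · linarith [hp.1]
      · refine (norm_add_le _ _).trans (add_le_add hp.2 ?_)
        exact hτ.trans hs.2
    · rw [norm_neg]
      refine (norm_sum_le _ _).trans (Finset.sum_le_sum fun l _ => ?_)
      refine hC2 l (p.1 + ξ l • EuclideanSpace.single l (1:ℝ), p.2) ?_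
      rw [mem_closedBall_zero_iff, Prod.norm_def, max_le_iff]
      constructor
      · refine (norm_add_le _ _).trans (add_le_add hp.1 ?_)
        rw [norm_smul]
        simp only [PiLp.norm_single, norm_one, mul_one, Real.norm_eq_abs]
        exact (hξ l).trans hs.2
      · simp only; linarith [hp.2]
end

section
variable {N : ℕ}

theorem QT_sub {Ω : Set (Euc N)} (hΩb : Bornology.IsBounded Ω) (T : ℝ) :
    ∃ R : ℝ, QT Ω T ⊆ Metric.closedBall (0 : Euc N × ℝ) R :=
  ((hΩb.prod (Metric.isBounded_Ioo 0 T)).subset_closedBall 0)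

theorem cont_intQ {Ω : Set (Euc N)} (hΩb : Bornology.IsBounded Ω) (T : ℝ) {D : Type*}
    [NormedAddCommGroup D] {F : Euc N × ℝ → D}
    (hF : Continuous F) : IntegrableOn F (QT Ω T) := by
  obtain ⟨R, hR⟩ := QT_sub hΩb T
  exact (hF.continuousOn.integrableOn_compact (isCompact_closedBall 0 R)).mono_set hR

theorem cont_intO {Ω : Set (Euc N)} (hΩb : Bornology.IsBounded Ω) {D : Type*}
    [NormedAddCommGroup D] {F : Euc N → D}
    (hF : Continuous F) : IntegrableOn F Ω := by
  obtain ⟨R, hR⟩ := hΩb.subset_closedBall 0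
  exact (hF.continuousOn.integrableOn_compact (isCompact_closedBall 0 R)).mono_set hR

theorem cont_slice {Ω : Set (Euc N)} (hΩb : Bornology.IsBounded Ω) {F : Euc N × ℝ → ℝ}
    (hF : Continuous F) : Continuous fun t => ∫ x in Ω, F (x, t) := by
  have hK : IsCompact (closure Ω) := hΩb.isCompact_closure
  have := continuous_parametric_integral_of_continuous (μ := volume.restrict Ω)
    (f := fun (t : ℝ) (x : Euc N) => F (x, t)) (s := closure Ω)
    (by exact hF.comp (continuous_snd.prodMk continuous_fst)) hK
  rwa [Measure.restrict_restrict isClosed_closure.measurableSet,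
    inter_eq_self_of_subset_right subset_closure] at this

theorem fubQ {Ω : Set (Euc N)} (hΩb : Bornology.IsBounded Ω) {T : ℝ} (hT : 0 < T)
    {F : Euc N × ℝ → ℝ} (hF : Continuous F) :
    ∫ p in QT Ω T, F p = ∫ t in (0:ℝ)..T, ∫ x in Ω, F (x, t) := by
  have h1 := cont_intQ hΩb T hF
  rw [intervalIntegral.integral_of_le hT.le, integral_Ioc_eq_integral_Ioo]
  unfold QT at *
  rw [Measure.volume_eq_prod] at *
  rw [← setIntegral_prod_swap, setIntegral_prod]
  · rfl
  · exact h1.swap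

variable {D : Type*} [NormedAddCommGroup D] [NormedSpace ℝ D]

theorem kato_pointwise {Ω : Set (Euc N)} (hΩo : IsOpen Ω) (hΩb : Bornology.IsBounded Ω) {T : ℝ}
    {Z W : Euc N × ℝ → D} (h : Nice Ω T Z W)
    {lam : ℝ} (hlam : 0 ≤ lam) {ε : ℝ} (hε : 0 < ε) :
    ∃ δ > 0, ∀ s ∈ Ioo 0 δ, ∀ t ∈ Icc 0 T, ∀ x,
      (s⁻¹ + (∑ l : Fin N, (s ^ 2)⁻¹ * 2) + lam) * Ω.indicator (fun x => max (‖Z (x, t)‖ - ε) 0) x ≤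
      Ω.indicator (fun x => ‖DL s Z (x, t) + lam • Z (x, t)‖) x +
      s⁻¹ * Ω.indicator (fun x => max (‖Z (x, t + s)‖ - ε) 0) x +
      ∑ l : Fin N, (s ^ 2)⁻¹ * (
        Ω.indicator (fun x => max (‖Z (x, t)‖ - ε) 0) (x + s • EuclideanSpace.single l (1:ℝ)) +
        Ω.indicator (fun x => max (‖Z (x, t)‖ - ε) 0) (x - s • EuclideanSpace.single l (1:ℝ))) := by
  have hcl : IsCompact (closure Ω) := hΩb.isCompact_closure
  set K : Set (Euc N × ℝ) := (closure Ω ×ˢ Icc 0 T) ∩ {p | ε ≤ ‖Z p‖} with hKdef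
  have hK : IsCompact K := (hcl.prod isCompact_Icc).inter_right
    (isClosed_le continuous_const h.contZ.norm)
  have hK' : IsCompact (Prod.fst '' K) := hK.image continuous_fst
  have hsub : Prod.fst '' K ⊆ Ω := by
    rintro _ ⟨⟨x, t⟩, ⟨⟨hx, ht⟩, hp⟩, rfl⟩
    by_contra hcon
    have : x ∈ frontier Ω := ⟨hx, by rwa [hΩo.interior_eq]⟩
    have h0 := h.bdry x this t ht
    simp only [mem_ofPred_eq, h0, norm_zero] at hp
    linarith
  obtain ⟨δ, hδ, hδ2⟩ := hK'.exists_thickening_subset_open hΩo hsub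
  refine ⟨δ, hδ, fun s hs t ht x => ?_⟩
  have hs0 : 0 < s := hs.1
  have hnn : ∀ (t : ℝ) x, 0 ≤ Ω.indicator (fun x => max (‖Z (x, t)‖ - ε) 0) x := fun t x =>
    indicator_nonneg (fun _ _ => le_max_right _ _) _
  have hnn2 : 0 ≤ Ω.indicator (fun x => ‖DL s Z (x, t) + lam • Z (x, t)‖) x :=
    indicator_nonneg (fun _ _ => norm_nonneg _) _
  have hR2 : 0 ≤ ∑ l : Fin N, (s ^ 2)⁻¹ * (
        Ω.indicator (fun x => max (‖Z (x, t)‖ - ε) 0) (x + s • EuclideanSpace.single l (1:ℝ)) +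
        Ω.indicator (fun x => max (‖Z (x, t)‖ - ε) 0) (x - s • EuclideanSpace.single l (1:ℝ))) :=
    Finset.sum_nonneg fun l _ => mul_nonneg (by positivity) (add_nonneg (hnn _ _) (hnn _ _))
  by_cases hx : x ∈ Ω
  swap
  · rw [indicator_of_notMem hx, mul_zero]
    have := mul_nonneg (inv_nonneg.2 hs0.le) (hnn (t + s) x)
    linarith
  by_cases hz : ‖Z (x, t)‖ ≤ ε
  · have : Ω.indicator (fun x => max (‖Z (x, t)‖ - ε) 0) x = 0 := by
      rw [indicator_of_mem hx, max_eq_right (by linarith)]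
    rw [this, mul_zero]
    have := mul_nonneg (inv_nonneg.2 hs0.le) (hnn (t + s) x)
    linarith
  push Not at hz
  have hxK : x ∈ Prod.fst '' K := ⟨(x, t), ⟨⟨subset_closure hx, ht⟩, hz.le⟩, rfl⟩
  have hnb : ∀ y : Euc N, ‖y - x‖ ≤ s → y ∈ Ω := by
    intro y hy
    apply hδ2
    rw [Metric.mem_thickening_iff]
    exact ⟨x, hxK, by rw [dist_eq_norm]; exact hy.trans_lt hs.2⟩
  have hmax : ∀ (t : ℝ) (y : Euc N), y ∈ Ω →
      ‖Z (y, t)‖ - ε ≤ Ω.indicator (fun x => max (‖Z (x, t)‖ - ε) 0) y := by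
    intro t y hy
    rw [indicator_of_mem hy]
    exact le_max_left _ _
  have hnorm : ∀ l : Fin N, ‖s • EuclideanSpace.single l (1:ℝ)‖ ≤ s := by
    intro l
    rw [norm_smul]
    simp [abs_of_pos hs0]
  have hyp : ∀ l : Fin N, x + s • EuclideanSpace.single l (1:ℝ) ∈ Ω := fun l =>
    hnb _ (by rw [add_sub_cancel_left]; exact hnorm l)
  have hym : ∀ l : Fin N, x - s • EuclideanSpace.single l (1:ℝ) ∈ Ω := fun l =>
    hnb _ (by rw [sub_sub_cancel_left, norm_neg]; exact hnorm l)
  have hv : (s⁻¹ + (∑ l : Fin N, (s ^ 2)⁻¹ * 2) + lam) • Z (x, t) =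
      (DL s Z (x, t) + lam • Z (x, t)) + (s⁻¹ • Z (x, t + s) + ∑ l : Fin N, (s ^ 2)⁻¹ •
        (Z (x + s • EuclideanSpace.single l (1:ℝ), t) +
          Z (x - s • EuclideanSpace.single l (1:ℝ), t))) := by
    unfold DL
    have e : (∑ l : Fin N, (s ^ 2)⁻¹ * 2) • Z (x, t) =
        (∑ l : Fin N, (s ^ 2)⁻¹ • ((2:ℝ) • Z (x, t) -
          Z (x + s • EuclideanSpace.single l (1:ℝ), t)
          - Z (x - s • EuclideanSpace.single l (1:ℝ), t))) +
        ∑ l : Fin N, (s ^ 2)⁻¹ •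
        (Z (x + s • EuclideanSpace.single l (1:ℝ), t) +
          Z (x - s • EuclideanSpace.single l (1:ℝ), t)) := by
      rw [← Finset.sum_add_distrib, Finset.sum_smul]
      refine Finset.sum_congr rfl fun l _ => ?_
      module
    rw [add_smul, add_smul, e]
    module
  set c := s⁻¹ + (∑ l : Fin N, (s ^ 2)⁻¹ * 2) with hc
  have hc0 : 0 ≤ c := by
    have : 0 ≤ ∑ l : Fin N, (s ^ 2)⁻¹ * 2 := Finset.sum_nonneg fun l _ => by positivity
    positivity
  have hn : (c + lam) * ‖Z (x, t)‖ ≤ ‖DL s Z (x, t) + lam • Z (x, t)‖ + (s⁻¹ * ‖Z (x, t + s)‖ +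
      ∑ l : Fin N, (s ^ 2)⁻¹ * (‖Z (x + s • EuclideanSpace.single l (1:ℝ), t)‖ +
          ‖Z (x - s • EuclideanSpace.single l (1:ℝ), t)‖)) := by
    have e := congrArg norm hv
    rw [norm_smul, Real.norm_of_nonneg (by positivity)] at e
    rw [e]
    refine (norm_add_le _ _).trans (add_le_add le_rfl ((norm_add_le _ _).trans (add_le_add ?_ ?_)))
    · rw [norm_smul, Real.norm_of_nonneg (by positivity)]
    · refine (norm_sum_le _ _).trans (Finset.sum_le_sum fun l _ => ?_)
      rw [norm_smul, Real.norm_of_nonneg (by positivity)]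
      exact mul_le_mul_of_nonneg_left (norm_add_le _ _) (by positivity)
  rw [indicator_of_mem hx, max_eq_left (by linarith), indicator_of_mem hx]
  have h1 : s⁻¹ * ‖Z (x, t + s)‖ - s⁻¹ * ε ≤
      s⁻¹ * Ω.indicator (fun x => max (‖Z (x, t + s)‖ - ε) 0) x := by
    rw [← mul_sub]
    exact mul_le_mul_of_nonneg_left (hmax _ _ hx) (by positivity)
  have h2 : (∑ l : Fin N, (s ^ 2)⁻¹ * (‖Z (x + s • EuclideanSpace.single l (1:ℝ), t)‖ +
          ‖Z (x - s • EuclideanSpace.single l (1:ℝ), t)‖)) - (∑ l : Fin N, (s ^ 2)⁻¹ * 2) * ε ≤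
      ∑ l : Fin N, (s ^ 2)⁻¹ * (
        Ω.indicator (fun x => max (‖Z (x, t)‖ - ε) 0) (x + s • EuclideanSpace.single l (1:ℝ)) +
        Ω.indicator (fun x => max (‖Z (x, t)‖ - ε) 0) (x - s • EuclideanSpace.single l (1:ℝ))) := by
    rw [Finset.sum_mul, ← Finset.sum_sub_distrib]
    refine Finset.sum_le_sum fun l _ => ?_
    rw [mul_assoc, ← mul_sub]
    refine mul_le_mul_of_nonneg_left ?_ (by positivity)
    linarith [hmax t _ (hyp l), hmax t _ (hym l)]
  have h3 : (c + lam) * (‖Z (x, t)‖ - ε) ≤ (c + lam) * ‖Z (x, t)‖ - s⁻¹ * ε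
      - (∑ l : Fin N, (s ^ 2)⁻¹ * 2) * ε := by
    have : 0 ≤ lam * ε := by positivity
    rw [hc]
    nlinarith
  linarith

theorem kato_slice {Ω : Set (Euc N)} (hΩo : IsOpen Ω) (hΩb : Bornology.IsBounded Ω) {T : ℝ}
    {Z W : Euc N × ℝ → D} (h : Nice Ω T Z W)
    {lam : ℝ} (hlam : 0 ≤ lam) {ε : ℝ} (hε : 0 < ε) :
    ∃ δ > 0, ∀ s ∈ Ioo 0 δ, ∀ t ∈ Icc 0 T,
      s⁻¹ * ((∫ x in Ω, max (‖Z (x, t)‖ - ε) 0) - (∫ x in Ω, max (‖Z (x, t + s)‖ - ε) 0)) +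
      lam * (∫ x in Ω, max (‖Z (x, t)‖ - ε) 0) ≤
      ∫ x in Ω, ‖DL s Z (x, t) + lam • Z (x, t)‖ := by
  obtain ⟨δ, hδ, key⟩ := kato_pointwise hΩo hΩb h hlam hε
  refine ⟨δ, hδ, fun s hs t ht => ?_⟩
  have hcZ := h.contZ
  have hi : ∀ t : ℝ, Integrable (Ω.indicator (fun x => max (‖Z (x, t)‖ - ε) 0)) := fun t =>
    (integrable_indicator_iff hΩo.measurableSet).2 (cont_intO hΩb (by fun_prop))
  have hi2 : Integrable (Ω.indicator (fun x => ‖DL s Z (x, t) + lam • Z (x, t)‖)) := by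
    refine (integrable_indicator_iff hΩo.measurableSet).2 (cont_intO hΩb ?_)
    have := DL_cont s hcZ
    fun_prop
  have hmono := integral_mono ((hi t).const_mul _) (((hi2.add ((hi (t + s)).const_mul s⁻¹)).add
    (integrable_finsetSum Finset.univ fun l _ =>
      (((hi t).comp_add_right (s • EuclideanSpace.single l (1:ℝ))).add
        ((hi t).comp_sub_right (s • EuclideanSpace.single l (1:ℝ)))).const_mul (s ^ 2)⁻¹)))
    (key s hs t ht)
  rw [integral_const_mul, integral_add' (hi2.add ((hi (t + s)).const_mul s⁻¹))
    (integrable_finsetSum Finset.univ fun l _ =>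
      (((hi t).comp_add_right (s • EuclideanSpace.single l (1:ℝ))).add
        ((hi t).comp_sub_right (s • EuclideanSpace.single l (1:ℝ)))).const_mul (s ^ 2)⁻¹),
    integral_add' hi2 ((hi (t + s)).const_mul s⁻¹), integral_const_mul,
    integral_finsetSum _ (fun l _ =>
      (((hi t).comp_add_right (s • EuclideanSpace.single l (1:ℝ))).add
        ((hi t).comp_sub_right (s • EuclideanSpace.single l (1:ℝ)))).const_mul (s ^ 2)⁻¹)] at hmono
  have hl : ∀ l : Fin N, ∫ x, (s ^ 2)⁻¹ * (((fun x => Ω.indicator (fun x => max (‖Z (x, t)‖ - ε) 0)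
        (x + s • EuclideanSpace.single l (1:ℝ))) +
        (fun x => Ω.indicator (fun x => max (‖Z (x, t)‖ - ε) 0)
        (x - s • EuclideanSpace.single l (1:ℝ)))) x) =
        (s ^ 2)⁻¹ * 2 * ∫ x, Ω.indicator (fun x => max (‖Z (x, t)‖ - ε) 0) x := by
    intro l
    rw [integral_const_mul, integral_add' ((hi t).comp_add_right _) ((hi t).comp_sub_right _),
      integral_add_right_eq_self, integral_sub_right_eq_self]
    ring
  have hmul := Finset.sum_mul Finset.univ (fun _ : Fin N => (s ^ 2)⁻¹ * 2)
    (∫ x, Ω.indicator (fun x => max (‖Z (x, t)‖ - ε) 0) x)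
  rw [Finset.sum_congr rfl fun l _ => hl l, ← hmul] at hmono
  simp only [integral_indicator hΩo.measurableSet] at hmono
  generalize (∑ l : Fin N, (s ^ 2)⁻¹ * 2) = A at hmono
  linarith

theorem kato_eps {Ω : Set (Euc N)} (hΩo : IsOpen Ω) (hΩb : Bornology.IsBounded Ω) {T : ℝ}
    (hT : 0 < T) {Z W : Euc N × ℝ → D} (h : Nice Ω T Z W)
    {lam : ℝ} (hlam : 0 ≤ lam) {ε : ℝ} (hε : 0 < ε) :
    (∫ x in Ω, max (‖Z (x, 0)‖ - ε) 0) + lam * ∫ p in QT Ω T, max (‖Z p‖ - ε) 0 ≤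
      ∫ p in QT Ω T, ‖W p + lam • Z p‖ := by
  have hcZ := h.contZ
  set I : ℝ → ℝ := fun t => ∫ x in Ω, max (‖Z (x, t)‖ - ε) 0 with hI
  have hIc : Continuous I := cont_slice (F := fun p => max (‖Z p‖ - ε) 0) hΩb (by fun_prop)
  have hIT : I T = 0 := by
    rw [hI]
    simp only
    rw [setIntegral_congr_fun (g := fun _ => (0:ℝ)) hΩo.measurableSet]
    · simp
    · intro x hx
      simp only [h.fin x (subset_closure hx), norm_zero]
      rw [max_eq_right (by linarith)]
  obtain ⟨δ, hδ, key⟩ := kato_slice hΩo hΩb h hlam hε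
  have hfub : ∫ p in QT Ω T, max (‖Z p‖ - ε) 0 = ∫ t in (0:ℝ)..T, I t :=
    fubQ hΩb hT (by fun_prop)
  set P : ℝ → ℝ := fun x => ∫ t in (0:ℝ)..x, I t with hP
  have hPd : ∀ x, HasDerivAt P (I x) x := fun x =>
    (intervalIntegral.integral_hasDerivAt_right (hIc.intervalIntegrable _ _)
      (hIc.stronglyMeasurableAtFilter _ _) hIc.continuousAt)
  have hint : ∀ s ∈ Ioo 0 δ, s⁻¹ * (P (0 + s) - P 0) - s⁻¹ * (P (T + s) - P T) + lam * P T ≤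
      ∫ p in QT Ω T, ‖DL s Z p + lam • Z p‖ := by
    intro s hs
    have hcD := DL_cont s hcZ
    rw [fubQ hΩb hT (by fun_prop)]
    have h2 : Continuous fun t => I (t + s) := hIc.comp (continuous_add_const s)
    have h1 := intervalIntegral.integral_mono_on hT.le
      (μ := volume) (f := fun t => s⁻¹ * (I t - I (t + s)) + lam * I t)
      (g := fun t => ∫ x in Ω, ‖DL s Z (x, t) + lam • Z (x, t)‖)
      (Continuous.intervalIntegrable (by fun_prop) _ _)
      ((cont_slice (F := fun p => ‖DL s Z p + lam • Z p‖) hΩb (by fun_prop)).intervalIntegrable _ _)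
      (fun t ht => key s hs t ht)
    refine le_trans (le_of_eq ?_) h1
    rw [intervalIntegral.integral_add (Continuous.intervalIntegrable (by fun_prop) _ _)
      (Continuous.intervalIntegrable (by fun_prop) _ _), intervalIntegral.integral_const_mul,
      intervalIntegral.integral_const_mul,
      intervalIntegral.integral_sub (Continuous.intervalIntegrable (by fun_prop) _ _)
      (Continuous.intervalIntegrable (by fun_prop) _ _), intervalIntegral.integral_comp_add_right]
    have e1 : ∫ x in (0 + s)..(T + s), I x = P (T + s) - P (0 + s) :=
      (intervalIntegral.integral_interval_sub_left (hIc.intervalIntegrable _ _)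
        (hIc.intervalIntegrable _ _)).symm
    rw [e1]
    have e0 : P 0 = 0 := intervalIntegral.integral_same
    have eT : ∫ x in (0:ℝ)..T, I x = P T := rfl
    rw [e0, eT]
    ring
  have hlim1 : Tendsto (fun s => s⁻¹ * (P (0 + s) - P 0) - s⁻¹ * (P (T + s) - P T) + lam * P T)
      (𝓝[>] 0) (𝓝 (I 0 - I T + lam * P T)) := by
    have a0 := (hasDerivAt_iff_tendsto_slope_zero.1 (hPd 0)).mono_left
      (nhdsWithin_mono 0 (fun s (hs : 0 < s) => hs.ne'))
    have aT := (hasDerivAt_iff_tendsto_slope_zero.1 (hPd T)).mono_left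
      (nhdsWithin_mono 0 (fun s (hs : 0 < s) => hs.ne'))
    exact (a0.sub aT).add tendsto_const_nhds
  have hlim2 : Tendsto (fun s => ∫ p in QT Ω T, ‖DL s Z p + lam • Z p‖)
      (𝓝[>] 0) (𝓝 (∫ p in QT Ω T, ‖W p + lam • Z p‖)) := by
    obtain ⟨R, hR⟩ := QT_sub hΩb T
    obtain ⟨C, hC⟩ := h.bd R
    refine tendsto_integral_filter_of_dominated_convergence (fun p => ‖C‖ + ‖lam • Z p‖) ?_ ?_ ?_ ?_
    · refine Eventually.of_forall fun s => ?_
      have hcD := DL_cont s hcZ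
      exact (cont_intQ hΩb T (F := fun p => ‖DL s Z p + lam • Z p‖) (by fun_prop)).aestronglyMeasurable
    · filter_upwards [Ioc_mem_nhdsGT (zero_lt_one)] with s hs
      refine (ae_restrict_iff' (hΩo.measurableSet.prod measurableSet_Ioo)).2
        (Eventually.of_forall fun p hp => ?_)
      rw [norm_norm]
      exact (norm_add_le _ _).trans (add_le_add ((hC p (hR hp) s hs).trans (le_abs_self C)) le_rfl)
    · exact cont_intQ hΩb T (by fun_prop)
    · exact Eventually.of_forall fun p => ((h.lim p).add_const _).norm
  have := le_of_tendsto_of_tendsto hlim1 hlim2 (by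
    filter_upwards [Ioo_mem_nhdsGT hδ] with s hs using hint s hs)
  rw [hfub]
  rw [hIT, sub_zero] at this
  exact this

theorem QT_vol {Ω : Set (Euc N)} (hΩb : Bornology.IsBounded Ω) (T : ℝ) :
    volume (QT Ω T) < ⊤ := (hΩb.prod (Metric.isBounded_Ioo 0 T)).measure_lt_top

theorem kato {Ω : Set (Euc N)} (hΩo : IsOpen Ω) (hΩb : Bornology.IsBounded Ω) {T : ℝ}
    (hT : 0 < T) {Z W : Euc N × ℝ → D} (h : Nice Ω T Z W)
    {lam : ℝ} (hlam : 0 ≤ lam) :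
    (∫ x in Ω, ‖Z (x, 0)‖) + lam * ∫ p in QT Ω T, ‖Z p‖ ≤
      ∫ p in QT Ω T, ‖W p + lam • Z p‖ := by
  have hcZ := h.contZ
  have hv := QT_vol hΩb T
  have hv' := hΩb.measure_lt_top (μ := volume)
  have key : ∀ ε > 0, ((∫ x in Ω, ‖Z (x, 0)‖) - ε * volume.real Ω) + lam * ((∫ p in QT Ω T, ‖Z p‖) -
      ε * volume.real (QT Ω T)) ≤ ∫ p in QT Ω T, ‖W p + lam • Z p‖ := by
    intro ε hε
    refine le_trans (add_le_add ?_ (mul_le_mul_of_nonneg_left ?_ hlam)) (kato_eps hΩo hΩb hT h hlam hε)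
    · have : ∫ x in Ω, (‖Z (x, 0)‖ - ε) = (∫ x in Ω, ‖Z (x, 0)‖) - ε * volume.real Ω := by
        rw [integral_sub (cont_intO hΩb (F := fun x => ‖Z (x, 0)‖) (by fun_prop))
          (cont_intO hΩb (F := fun _ => ε) continuous_const)]
        simp [mul_comm]
      rw [← this]
      exact integral_mono (cont_intO hΩb (by fun_prop)) (cont_intO hΩb (by fun_prop))
        fun x => le_max_left _ _
    · have : ∫ p in QT Ω T, (‖Z p‖ - ε) = (∫ p in QT Ω T, ‖Z p‖) - ε * volume.real (QT Ω T) := by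
        rw [integral_sub (cont_intQ hΩb T (F := fun p => ‖Z p‖) (by fun_prop))
          (cont_intQ hΩb T (F := fun _ => ε) continuous_const)]
        simp [mul_comm]
      rw [← this]
      exact integral_mono (cont_intQ hΩb T (by fun_prop)) (cont_intQ hΩb T (by fun_prop))
        fun x => le_max_left _ _
  have hl : Tendsto (fun ε : ℝ => ((∫ x in Ω, ‖Z (x, 0)‖) - ε * volume.real Ω) + lam *
      ((∫ p in QT Ω T, ‖Z p‖) - ε * volume.real (QT Ω T))) (𝓝[>] 0)
      (𝓝 (((∫ x in Ω, ‖Z (x, 0)‖) - 0 * volume.real Ω) + lam *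
      ((∫ p in QT Ω T, ‖Z p‖) - 0 * volume.real (QT Ω T)))) := by
    refine Tendsto.mono_left (Continuous.tendsto ?_ 0) nhdsWithin_le_nhds
    fun_prop
  simp only [zero_mul, sub_zero] at hl
  exact le_of_tendsto hl (by filter_upwards [self_mem_nhdsWithin] with ε hε using key ε hε)

end

section

theorem hb_abs {V F : Type*} [AddCommGroup V] [Module ℝ V] [NormedAddCommGroup F] [NormedSpace ℝ F]
    (A : V →ₗ[ℝ] F) (L : V →ₗ[ℝ] ℝ) (h : ∀ z, |L z| ≤ ‖A z‖) :
    ∃ φ : F →L[ℝ] ℝ, ‖φ‖ ≤ 1 ∧ ∀ z, φ (A z) = L z := by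
  obtain ⟨B, hB⟩ := A.rangeRestrict.exists_rightInverse_of_surjective A.range_rangeRestrict
  have hB' : ∀ y : A.range, A (B y) = y := fun y => by
    have := congrArg Subtype.val (LinearMap.congr_fun hB y)
    simpa using this
  let φ0 : A.range →L[ℝ] ℝ := (L.comp B).mkContinuous 1 (fun y => by
    have := h (B y)
    rw [hB' y] at this
    simpa using this)
  obtain ⟨φ, hφ, hn⟩ := exists_extension_norm_eq A.range φ0
  refine ⟨φ, ?_, fun z => ?_⟩
  · rw [hn]; exact LinearMap.mkContinuous_norm_le _ zero_le_one _
  · have e := hφ ⟨A z, z, rfl⟩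
    have e2 : φ0 ⟨A z, z, rfl⟩ = L (B ⟨A z, z, rfl⟩) := rfl
    have e3 : φ (A z) = L (B ⟨A z, z, rfl⟩) := e.trans e2
    rw [e3]
    have := h (B ⟨A z, z, rfl⟩ - z)
    rw [map_sub, map_sub, hB', sub_self, norm_zero] at this
    have := abs_nonpos_iff.1 this
    linarith

variable {α : Type*} [MeasurableSpace α] {m : Measure α} [IsFiniteMeasure m]
  {F : Type*} [NormedAddCommGroup F] [NormedSpace ℝ F]

theorem int_smul_of_L2 (d : F) (w : α → ℝ) (hw : MemLp w 2 m) :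
    Integrable (fun p => w p • d) m :=
  (hw.integrable one_le_two).smul_const d

theorem norm_toL1 (f : α → F) (hf : Integrable f m) : ‖hf.toL1 f‖ = ∫ p, ‖f p‖ ∂m := by
  rw [L1.norm_eq_integral_norm]
  refine integral_congr_ae ?_
  filter_upwards [hf.coeFn_toL1] with p hp
  rw [hp]

theorem riesz_d (φ : (α →₁[m] F) →L[ℝ] ℝ) (hφ : ‖φ‖ ≤ 1) (d : F) :
    ∃ v : α → ℝ, Measurable v ∧ Integrable v m ∧ ∀ (w : α → ℝ) (_ : MemLp w 2 m)
      (h : Integrable (fun p => w p • d) m), φ (h.toL1 _) = ∫ p, w p * v p ∂m := by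
  let ψl : (Lp ℝ 2 m) →ₗ[ℝ] ℝ :=
    { toFun := fun w => φ ((int_smul_of_L2 d w (Lp.memLp w)).toL1 _)
      map_add' := fun a b => by
        rw [← map_add, ← Integrable.toL1_add]
        congr 1
        rw [Integrable.toL1_eq_toL1_iff]
        filter_upwards [Lp.coeFn_add a b] with p hp
        simp only [hp, Pi.add_apply, add_smul]
      map_smul' := fun c a => by
        rw [RingHom.id_apply, ← map_smul, ← Integrable.toL1_smul]
        congr 1
        rw [Integrable.toL1_eq_toL1_iff]
        filter_upwards [Lp.coeFn_smul c a] with p hp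
        simp only [hp, Pi.smul_apply, smul_assoc] }
  let ψ : (Lp ℝ 2 m) →L[ℝ] ℝ := ψl.mkContinuous
    ((m univ ^ (1 / (1:ℝ≥0∞).toReal - 1 / (2:ℝ≥0∞).toReal)).toReal * ‖d‖) (fun w => by
      have h1 : ‖φ ((int_smul_of_L2 d w (Lp.memLp w)).toL1 _)‖ ≤
          ‖(int_smul_of_L2 d w (Lp.memLp w)).toL1 _‖ :=
        (φ.le_of_opNorm_le hφ _).trans (by rw [one_mul])
      refine h1.trans ?_
      rw [norm_toL1]
      simp only [norm_smul]
      rw [integral_mul_const]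
      have h2 := eLpNorm_le_eLpNorm_mul_rpow_measure_univ (p := 1) (q := 2) (μ := m) one_le_two
        (Lp.aestronglyMeasurable w)
      have h3 : ∫ p, ‖w p‖ ∂m = (eLpNorm w 1 m).toReal := by
        rw [eLpNorm_one_eq_lintegral_enorm, integral_norm_eq_lintegral_enorm
          (Lp.aestronglyMeasurable w)]
      rw [h3, Lp.norm_def]
      have h4 := ENNReal.toReal_mono (ENNReal.mul_ne_top (Lp.eLpNorm_ne_top w)
        (ENNReal.rpow_ne_top_of_nonneg (by norm_num) (measure_ne_top m univ))) h2
      rw [ENNReal.toReal_mul] at h4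
      calc _ ≤ _ := mul_le_mul_of_nonneg_right h4 (norm_nonneg d)
        _ = _ := by ring)
  let v0 := (InnerProductSpace.toDual ℝ (Lp ℝ 2 m)).symm ψ
  have hv0 : ∀ w : Lp ℝ 2 m, ψ w = ∫ p, v0 p * w p ∂m := by
    intro w
    rw [← InnerProductSpace.toDual_symm_apply (𝕜 := ℝ) (x := w) (y := ψ), L2.inner_def]
    simp [v0, mul_comm]
  have hv0i : Integrable v0 m := (Lp.memLp v0).integrable one_le_two
  refine ⟨hv0i.1.mk v0, hv0i.1.stronglyMeasurable_mk.measurable, hv0i.congr hv0i.1.ae_eq_mk, ?_⟩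
  intro w hw h
  have e := hv0 (hw.toLp w)
  have e2 : ψ (hw.toLp w) = φ (h.toL1 _) := by
    change φ _ = _
    congr 1
    rw [Integrable.toL1_eq_toL1_iff]
    filter_upwards [hw.coeFn_toLp] with p hp
    simp only [hp]
  rw [← e2, e]
  refine integral_congr_ae ?_
  filter_upwards [hw.coeFn_toLp, hv0i.1.ae_eq_mk] with p h1 h2
  rw [h1, h2, mul_comm]

theorem riesz_bound (φ : (α →₁[m] F) →L[ℝ] ℝ) (hφ : ‖φ‖ ≤ 1) (d : F) (v : α → ℝ)
    (hvi : Integrable v m)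
    (hv : ∀ (w : α → ℝ) (_ : MemLp w 2 m)
      (h : Integrable (fun p => w p • d) m), φ (h.toL1 _) = ∫ p, w p * v p ∂m) :
    ∀ᵐ p ∂m, |v p| ≤ ‖d‖ := by
  have key : ∀ s, MeasurableSet s → |∫ p in s, v p ∂m| ≤ m.real s * ‖d‖ := by
    intro s hs
    have hw : MemLp (s.indicator fun _ => (1:ℝ)) 2 m :=
      memLp_indicator_const 2 hs 1 (Or.inr (measure_ne_top m s))
    have h := int_smul_of_L2 d _ hw
    have e := hv _ hw h
    have e1 : ∫ p, s.indicator (fun _ => (1:ℝ)) p * v p ∂m = ∫ p in s, v p ∂m := by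
      rw [← integral_indicator hs]
      congr 1
      funext p
      by_cases hp : p ∈ s <;> simp [hp]
    rw [← e1, ← e]
    have h1 : ‖φ (h.toL1 _)‖ ≤ ‖h.toL1 _‖ :=
        (φ.le_of_opNorm_le hφ _).trans (by rw [one_mul])
    refine h1.trans ?_
    rw [norm_toL1]
    simp only [norm_smul]
    rw [integral_mul_const]
    refine mul_le_mul_of_nonneg_right (le_of_eq ?_) (norm_nonneg d)
    have : (fun p => ‖s.indicator (fun _ => (1:ℝ)) p‖) = s.indicator (fun _ => (1:ℝ)) := by
      funext p
      by_cases hp : p ∈ s <;> simp [hp]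
    rw [this, integral_indicator hs]
    simp
  have h1 : v ≤ᵐ[m] fun _ => ‖d‖ := ae_le_of_forall_setIntegral_le hvi (integrable_const _)
    fun s hs _ => by
      have := le_of_abs_le (key s hs)
      simpa using this
  have h2 : (fun p => - v p) ≤ᵐ[m] fun _ => ‖d‖ :=
    ae_le_of_forall_setIntegral_le hvi.neg (integrable_const _)
    fun s hs _ => by
      have := neg_le_of_abs_le (key s hs)
      rw [integral_neg]
      simp only [setIntegral_const, smul_eq_mul]
      linarith
  filter_upwards [h1, h2] with p a b
  rw [abs_le]; constructor <;> linarith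

theorem riesz_S (φ : (α →₁[m] F) →L[ℝ] ℝ) (hφ : ‖φ‖ ≤ 1) :
    ∃ S : F → α → ℝ, (∀ d, Measurable (S d)) ∧ (∀ d, ∀ᵐ p ∂m, |S d p| ≤ ‖d‖) ∧
      (∀ d d', ∀ᵐ p ∂m, |S d p - S d' p| ≤ ‖d - d'‖) ∧
      ∀ d (w : α → ℝ) (_ : MemLp w 2 m)
      (h : Integrable (fun p => w p • d) m), φ (h.toL1 _) = ∫ p, w p * S d p ∂m := by
  choose S hS1 hS2 hS3 using riesz_d φ hφ
  refine ⟨S, hS1, fun d => riesz_bound φ hφ d _ (hS2 d) (hS3 d), fun d d' => ?_, hS3⟩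
  have hb := riesz_bound φ hφ d _ (hS2 d) (hS3 d)
  have hb' := riesz_bound φ hφ d' _ (hS2 d') (hS3 d')
  refine riesz_bound φ hφ (d - d') (fun p => S d p - S d' p) ((hS2 d).sub (hS2 d')) ?_
  intro w hw h
  have hi : ∀ d, Integrable (fun p => w p * S d p) m := fun d =>
    Integrable.mul_bdd (c := ‖d‖) (hw.integrable one_le_two) (hS1 d).aestronglyMeasurable
      (riesz_bound φ hφ d _ (hS2 d) (hS3 d))
  have e1 := hS3 d w hw (int_smul_of_L2 d _ hw)
  have e2 := hS3 d' w hw (int_smul_of_L2 d' _ hw)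
  simp only [mul_sub]
  rw [integral_sub (hi d) (hi d'), ← e1, ← e2, ← map_sub, ← Integrable.toL1_sub]
  congr 1
  rw [Integrable.toL1_eq_toL1_iff]
  refine Eventually.of_forall fun p => ?_
  simp [smul_sub]

end

section
variable {N : ℕ}

/-- bounded functions on an extended space-time -/
abbrev BD (N : ℕ) : Type := lp (fun _ : Option (Euc N × ℝ) => ℝ) ∞

theorem BD_le (d : BD N) (i) : |d i| ≤ ‖d‖ := lp.norm_apply_le_norm ENNReal.top_ne_zero d i

theorem BD_cont (i : Option (Euc N × ℝ)) : Continuous (fun d : BD N => d i) := by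
  have : LipschitzWith 1 (fun d : BD N => d i) := by
    refine LipschitzWith.of_dist_le_mul fun d d' => ?_
    have := BD_le (d - d') i
    simpa [Real.dist_eq, dist_eq_norm] using this
  exact this.continuous

/-- admissible pairs -/
def GG (Ω : Set (Euc N)) (T : ℝ) : Submodule ℝ ((Euc N × ℝ → BD N) × (Euc N × ℝ → BD N)) where
  carrier := {q | Nice Ω T q.1 q.2 ∧ Measurable fun p => (q.1 p) (some p)}
  add_mem' := fun {a b} ha hb => ⟨ha.1.add hb.1, ha.2.add hb.2⟩
  zero_mem' := ⟨Nice.zero, measurable_const⟩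
  smul_mem' := fun c a ha => ⟨ha.1.smul c, ha.2.const_mul c⟩

theorem QT_meas {Ω : Set (Euc N)} (hΩo : IsOpen Ω) (T : ℝ) : MeasurableSet (QT Ω T) :=
  hΩo.measurableSet.prod measurableSet_Ioo

theorem linop {Ω : Set (Euc N)} (hΩo : IsOpen Ω) (hΩb : Bornology.IsBounded Ω) {T : ℝ}
    (hT : 0 < T) {lam : ℝ} (hlam : 0 < lam) {B : ℝ} (hB : 0 < B) (f : Euc N → ℝ)
    (hf : Measurable f) (hfB : ∀ x, |f x| ≤ B) :
    ∃ S : (Euc N × ℝ → ℝ) → (Euc N × ℝ → ℝ),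
      (∀ h, Measurable (S h)) ∧
      (∀ h, (∀ p, |h p| ≤ B) → ∀ᵐ p ∂(volume.restrict (QT Ω T)), |S h p| ≤ B) ∧
      (∀ h h' C, (∀ p, |h p| ≤ B) → (∀ p, |h' p| ≤ B) → (∀ p, |h p - h' p| ≤ C) →
        ∀ᵐ p ∂(volume.restrict (QT Ω T)), |S h p - S h' p| ≤ C) ∧
      (∀ h, Measurable h → (∀ p, |h p| ≤ B) → ∀ ζ, TestZero Ω T ζ →
        ∫ p in QT Ω T, (- heatAdj ζ p + lam * ζ p.1 p.2) * S h p =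
          (∫ x in Ω, f x * ζ x 0) + lam * ∫ p in QT Ω T, ζ p.1 p.2 * h p) := by
  have hv := QT_vol hΩb T
  have hv' := hΩb.measure_lt_top (μ := volume)
  have : IsFiniteMeasure (volume.restrict (QT Ω T)) := ⟨by simpa using hv⟩
  have : IsFiniteMeasure (volume.restrict Ω) := ⟨by simpa using hv'⟩
  have hint : ∀ q : GG Ω T, Integrable (fun p => q.1.2 p + lam • q.1.1 p)
      (volume.restrict (QT Ω T)) := fun q =>
    cont_intQ hΩb T (by have := q.2.1.contZ; have := q.2.1.contW; fun_prop)
  let A : GG Ω T →ₗ[ℝ] ((Euc N × ℝ) →₁[volume.restrict (QT Ω T)] BD N) :=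
    { toFun := fun q => (hint q).toL1 _
      map_add' := fun a b => by
        rw [← Integrable.toL1_add]
        congr 1
        funext p
        simp only [Submodule.coe_add, Prod.fst_add, Prod.snd_add, Pi.add_apply]
        module
      map_smul' := fun c a => by
        rw [RingHom.id_apply, ← Integrable.toL1_smul]
        congr 1
        funext p
        simp only [Submodule.coe_smul, Prod.smul_fst, Prod.smul_snd, Pi.smul_apply]
        module }
  have hi1 : ∀ q : GG Ω T, Integrable (fun x => f x / B * (q.1.1 (x, 0)) none)
      (volume.restrict Ω) := by
    intro q
    refine Integrable.bdd_mul (c := 1) ?_ (hf.div_const B).aestronglyMeasurable ?_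
    · have := q.2.1.contZ
      exact cont_intO hΩb ((BD_cont none).comp (this.comp (by fun_prop)))
    · refine Eventually.of_forall fun x => ?_
      rw [Real.norm_eq_abs, abs_div, abs_of_pos hB]
      exact div_le_one_of_le₀ (hfB x) hB.le
  have hi2 : ∀ q : GG Ω T, Integrable (fun p => (q.1.1 p) (some p))
      (volume.restrict (QT Ω T)) := by
    intro q
    refine Integrable.mono' (cont_intQ hΩb T q.2.1.contZ.norm) q.2.2.aestronglyMeasurable ?_
    exact Eventually.of_forall fun p => BD_le _ _
  let L : GG Ω T →ₗ[ℝ] ℝ :=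
    { toFun := fun q => (∫ x in Ω, f x / B * (q.1.1 (x, 0)) none) +
        lam * ∫ p in QT Ω T, (q.1.1 p) (some p)
      map_add' := fun a b => by
        have e1 := integral_add (hi1 a) (hi1 b)
        have e2 := integral_add (hi2 a) (hi2 b)
        have e3 : (∫ x in Ω, f x / B * ((a + b).1.1 (x, 0)) none) =
          ∫ x in Ω, (f x / B * (a.1.1 (x, 0)) none + f x / B * (b.1.1 (x, 0)) none) := by
          congr 1; funext x
          simp only [Submodule.coe_add, Prod.fst_add, Pi.add_apply, lp.coeFn_add]
          ring
        have e4 : (∫ p in QT Ω T, ((a + b).1.1 p) (some p)) =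
          ∫ p in QT Ω T, ((a.1.1 p) (some p) + (b.1.1 p) (some p)) := by
          congr 1
        rw [e3, e4, e1, e2]
        ring
      map_smul' := fun c a => by
        have e1 := integral_const_mul (μ := volume.restrict Ω) c
          (fun x => f x / B * (a.1.1 (x, 0)) none)
        have e2 := integral_const_mul (μ := volume.restrict (QT Ω T)) c
          (fun p => (a.1.1 p) (some p))
        have e3 : (∫ x in Ω, f x / B * ((c • a).1.1 (x, 0)) none) =
          ∫ x in Ω, c * (f x / B * (a.1.1 (x, 0)) none) := by
          congr 1; funext x
          simp only [Submodule.coe_smul, Prod.smul_fst, Pi.smul_apply, lp.coeFn_smul, smul_eq_mul]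
          ring
        have e4 : (∫ p in QT Ω T, ((c • a).1.1 p) (some p)) =
          ∫ p in QT Ω T, c * ((a.1.1 p) (some p)) := by
          congr 1
        rw [e3, e4, e1, e2, RingHom.id_apply, smul_eq_mul]
        ring }
  have hAL : ∀ q, |L q| ≤ ‖A q‖ := by
    intro q
    have hk := kato hΩo hΩb hT q.2.1 hlam.le
    have e : ‖A q‖ = ∫ p in QT Ω T, ‖q.1.2 p + lam • q.1.1 p‖ := norm_toL1 _ (hint q)
    rw [e]
    refine le_trans ?_ hk
    change |(∫ x in Ω, f x / B * (q.1.1 (x, 0)) none) +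
        lam * ∫ p in QT Ω T, (q.1.1 p) (some p)| ≤ _
    refine (abs_add_le _ _).trans (add_le_add ?_ ?_)
    · rw [← Real.norm_eq_abs]
      refine norm_integral_le_of_norm_le (cont_intO hΩb ?_) (Eventually.of_forall fun x => ?_)
      · have := q.2.1.contZ
        fun_prop
      · rw [Real.norm_eq_abs, abs_mul, abs_div, abs_of_pos hB]
        have h1 : |f x| / B ≤ 1 := div_le_one_of_le₀ (hfB x) hB.le
        calc _ ≤ 1 * |(q.1.1 (x, 0)) none| := mul_le_mul_of_nonneg_right h1 (abs_nonneg _)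
          _ ≤ _ := by rw [one_mul]; exact BD_le _ _
    · rw [abs_mul, abs_of_pos hlam]
      refine mul_le_mul_of_nonneg_left ?_ hlam.le
      rw [← Real.norm_eq_abs]
      exact norm_integral_le_of_norm_le (cont_intQ hΩb T q.2.1.contZ.norm)
        (Eventually.of_forall fun p => BD_le (q.1.1 p) (some p))
  obtain ⟨φ, hφ, hφA⟩ := hb_abs A L hAL
  obtain ⟨S0, hS1, hS2, hS3, hS4⟩ := riesz_S φ hφ
  have hmem : ∀ h : Euc N × ℝ → ℝ, (∀ p, |h p| ≤ B) →
      Memℓp (fun o : Option (Euc N × ℝ) => o.elim B h) ∞ := by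
    intro h hh
    refine memℓp_infty ⟨B, ?_⟩
    rintro _ ⟨o, rfl⟩
    cases o with
    | none => simp [abs_of_pos hB]
    | some p => exact hh p
  classical
  let dd : (Euc N × ℝ → ℝ) → BD N := fun h =>
    if hh : ∀ p, |h p| ≤ B then ⟨fun o => o.elim B h, hmem h hh⟩ else 0
  have hdd : ∀ h, (∀ p, |h p| ≤ B) → ∀ o, dd h o = o.elim B h := by
    intro h hh o
    simp only [dd, dif_pos hh]
    try rfl
  refine ⟨fun h => S0 (dd h), fun h => hS1 _, ?_, ?_, ?_⟩
  · intro h hh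
    have : ‖dd h‖ ≤ B := by
      refine lp.norm_le_of_forall_le hB.le fun o => ?_
      rw [hdd h hh]
      cases o with
      | none => simp [abs_of_pos hB]
      | some p => exact hh p
    filter_upwards [hS2 (dd h)] with p hp using hp.trans this
  · intro h h' C hh hh' hC
    have hC0 : 0 ≤ C := (abs_nonneg _).trans (hC 0)
    have : ‖dd h - dd h'‖ ≤ C := by
      refine lp.norm_le_of_forall_le hC0 fun o => ?_
      rw [lp.coeFn_sub, Pi.sub_apply, hdd h hh, hdd h' hh']
      cases o with
      | none => simpa using hC0
      | some p => exact hC p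
    filter_upwards [hS3 (dd h) (dd h')] with p hp using hp.trans this
  · intro h hm hh ζ hζ
    have hcont : Continuous fun p : Euc N × ℝ => ζ p.1 p.2 := hζ.1.1
    have hch := hζ.1.cont_heat
    have hg : ((fun p => ζ p.1 p.2 • dd h, fun p => (- heatAdj ζ p) • dd h) :
        (Euc N × ℝ → BD N) × (Euc N × ℝ → BD N)) ∈ GG Ω T := by
      refine ⟨hζ.nice.smul_const (dd h), ?_⟩
      have : (fun p : Euc N × ℝ => (ζ p.1 p.2 • dd h : BD N) (some p)) =
        fun p => ζ p.1 p.2 * h p := by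
        funext p
        rw [lp.coeFn_smul, Pi.smul_apply, hdd h hh]
        rfl
      simp only [this]
      exact hcont.measurable.mul hm
    have e1 := hφA ⟨_, hg⟩
    have hw : MemLp (fun p : Euc N × ℝ => - heatAdj ζ p + lam * ζ p.1 p.2) 2
        (volume.restrict (QT Ω T)) := by
      obtain ⟨R, hR⟩ := QT_sub hΩb T
      have hcc : Continuous (fun p : Euc N × ℝ => - heatAdj ζ p + lam * ζ p.1 p.2) := by fun_prop
      obtain ⟨C, hC⟩ := (isCompact_closedBall (0 : Euc N × ℝ) R).exists_bound_of_continuousOn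
        hcc.continuousOn
      refine MemLp.of_bound hcc.aestronglyMeasurable C ?_
      exact (ae_restrict_iff' (QT_meas hΩo T)).2 (Eventually.of_forall fun p hp => hC p (hR hp))
    have e2 := hS4 (dd h) _ hw (int_smul_of_L2 (dd h) _ hw)
    rw [← e2]
    have e3 : A ⟨_, hg⟩ = (int_smul_of_L2 (dd h) _ hw).toL1 _ := by
      change Integrable.toL1 _ (hint ⟨_, hg⟩) = _
      rw [Integrable.toL1_eq_toL1_iff]
      refine Eventually.of_forall fun p => ?_
      simp only
      module
    rw [← e3, e1]
    change (∫ x in Ω, f x / B * (ζ x 0 • dd h : BD N) none) +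
        lam * ∫ p in QT Ω T, (ζ p.1 p.2 • dd h : BD N) (some p) = _
    congr 1
    · congr 1
      funext x
      rw [lp.coeFn_smul, Pi.smul_apply, hdd h hh]
      simp only [Option.elim_none, smul_eq_mul]
      field_simp
    · congr 2
      funext p
      rw [lp.coeFn_smul, Pi.smul_apply, hdd h hh]
      rfl

end

section
variable {N : ℕ}

theorem bdd_int {Ω : Set (Euc N)} (hΩb : Bornology.IsBounded Ω) (T : ℝ)
    {F : Euc N × ℝ → ℝ} (hF : Continuous F) {v : Euc N × ℝ → ℝ} (hv : Measurable v) {C : ℝ}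
    (hC : ∀ p, |v p| ≤ C) : IntegrableOn (fun p => F p * v p) (QT Ω T) :=
  Integrable.mul_bdd (c := C) (cont_intQ hΩb T hF) hv.aestronglyMeasurable
    (Eventually.of_forall hC)

theorem dct_QT {Ω : Set (Euc N)} (hΩb : Bornology.IsBounded Ω) (T : ℝ)
    {F : Euc N × ℝ → ℝ} (hF : Continuous F) {v : ℕ → Euc N × ℝ → ℝ} (hv : ∀ n, Measurable (v n))
    {C : ℝ} (hC : ∀ n p, |v n p| ≤ C) {w : Euc N × ℝ → ℝ}
    (hw : ∀ p, Tendsto (fun n => v n p) atTop (𝓝 (w p))) :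
    Tendsto (fun n => ∫ p in QT Ω T, F p * v n p) atTop (𝓝 (∫ p in QT Ω T, F p * w p)) := by
  refine tendsto_integral_of_dominated_convergence (fun p => ‖F p‖ * C) ?_ ?_ ?_ ?_
  · exact fun n => (hF.measurable.mul (hv n)).aestronglyMeasurable
  · exact cont_intQ hΩb T (F := fun p => ‖F p‖ * C) (by fun_prop)
  · intro n
    refine Eventually.of_forall fun p => ?_
    rw [norm_mul]
    exact mul_le_mul_of_nonneg_left (hC n p) (norm_nonneg _)
  · exact Eventually.of_forall fun p => (hw p).const_mul _

theorem lemE {Ω : Set (Euc N)} (hΩo : IsOpen Ω) (hΩb : Bornology.IsBounded Ω) {T : ℝ}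
    (hT : 0 < T) {κ : ℝ} (hκ : 0 ≤ κ) (G : Euc N × ℝ → ℝ → ℝ) (hGm : ∀ p, Monotone (G p))
    (hGL : ∀ p a b, |G p a - G p b| ≤ κ * |a - b|) (hG0 : ∀ p, G p 0 = 0)
    (hGmeas : ∀ v : Euc N × ℝ → ℝ, Measurable v → Measurable fun p => G p (v p))
    {B : ℝ} (hB : 0 < B) (f : Euc N → ℝ)
    (hf : Measurable f) (hfB : ∀ x, |f x| ≤ B) (e : Euc N × ℝ → ℝ) (he : Measurable e)
    (heB : ∀ p, |e p| ≤ B) :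
    ∃ v : Euc N × ℝ → ℝ, Measurable v ∧ (∀ p, |v p| ≤ B) ∧ ∀ ζ, TestZero Ω T ζ →
      ∫ p in QT Ω T, (v p * (- heatAdj ζ p + ζ p.1 p.2) + ζ p.1 p.2 * G p (v p) -
        ζ p.1 p.2 * e p) = ∫ x in Ω, f x * ζ x 0 := by
  set lam : ℝ := κ + 1 with hlamdef
  have hlam : 0 < lam := by positivity
  obtain ⟨S, hS1, hS2, hS3, hS4⟩ := linop hΩo hΩb hT hlam hB f hf hfB
  set H : (Euc N × ℝ → ℝ) → (Euc N × ℝ → ℝ) := fun v p => (κ * v p - G p (v p) + e p) / lam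
    with hH
  have hHm : ∀ v, Measurable v → Measurable (H v) := fun v hv =>
    (((hv.const_mul κ).sub (hGmeas v hv)).add he).div_const lam
  have hHd : ∀ p a b, |(κ * a - G p a) - (κ * b - G p b)| ≤ κ * |a - b| := by
    intro p a b
    have h1 := hGL p a b
    rcases le_total a b with hab | hab
    · have h2 := hGm p hab
      rw [abs_of_nonpos (by linarith : a - b ≤ 0)] at *
      rw [abs_le] at *
      constructor <;> nlinarith
    · have h2 := hGm p hab
      rw [abs_of_nonneg (by linarith : 0 ≤ a - b)] at *
      rw [abs_le] at *
      constructor <;> nlinarith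
  set r : ℝ := κ / lam with hr
  have hr0 : 0 ≤ r := by positivity
  have hr1 : r < 1 := by rw [hr, div_lt_one hlam]; linarith
  have hHL : ∀ v w p, |H v p - H w p| ≤ r * |v p - w p| := by
    intro v w p
    have : H v p - H w p = ((κ * v p - G p (v p)) - (κ * w p - G p (w p))) / lam := by
      simp only [hH]; field_simp; ring
    rw [this, abs_div, abs_of_pos hlam, hr, div_mul_eq_mul_div]
    exact div_le_div_of_nonneg_right (hHd p _ _) hlam.le
  have hHB : ∀ v, (∀ p, |v p| ≤ B) → ∀ p, |H v p| ≤ B := by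
    intro v hv p
    simp only [hH]
    rw [abs_div, abs_of_pos hlam, div_le_iff₀ hlam]
    have h1 := hHd p (v p) 0
    rw [hG0, mul_zero, sub_zero, sub_zero, sub_zero] at h1
    have h2 := mul_le_mul_of_nonneg_left (hv p) hκ
    calc _ ≤ |κ * v p - G p (v p)| + |e p| := abs_add_le _ _
      _ ≤ B * lam := by rw [hlamdef]; linarith [heB p]
  let step : ℕ → (Euc N × ℝ → ℝ) → (Euc N × ℝ → ℝ) := fun n v p =>
    max (max (v p - 2 * B * r ^ n) (-B)) (min (min (v p + 2 * B * r ^ n) B) (S (H v) p))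
  let V : ℕ → (Euc N × ℝ → ℝ) := fun n => Nat.rec (fun _ => 0) step n
  have hV0 : V 0 = fun _ => 0 := rfl
  have hVs : ∀ n, V (n + 1) = step n (V n) := fun n => rfl
  have hδ : ∀ n, 0 ≤ 2 * B * r ^ n := fun n => by positivity
  have hVm : ∀ n, Measurable (V n) := by
    intro n
    induction n with
    | zero => exact measurable_const
    | succ n ih =>
      rw [hVs]
      exact ((ih.sub_const _).max measurable_const).max
        (((ih.add_const _).min measurable_const).min (hS1 _))
  have hVB : ∀ n p, |V n p| ≤ B := by
    intro n
    induction n with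
    | zero => intro p; simp [hV0, hB.le]
    | succ n ih =>
      intro p
      have h1 := abs_le.1 (ih p)
      have h2 := hδ n
      rw [hVs, abs_le]
      constructor
      · exact (le_max_right _ _).trans (le_max_left _ _)
      · refine max_le (max_le (by linarith) (by linarith)) ?_
        exact (min_le_left _ _).trans (min_le_right _ _)
  have hVd : ∀ n p, |V (n + 1) p - V n p| ≤ 2 * B * r ^ n := by
    intro n p
    have h1 := abs_le.1 (hVB n p)
    have h2 := hδ n
    rw [hVs, abs_le]
    have a1 : V n p - 2 * B * r ^ n ≤ step n (V n) p := (le_max_left _ _).trans (le_max_left _ _)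
    have a2 : step n (V n) p ≤ V n p + 2 * B * r ^ n := by
      refine max_le (max_le (by linarith) (by linarith)) ?_
      exact (min_le_left _ _).trans (min_le_left _ _)
    constructor <;> linarith
  have hstep : ∀ n p, |S (H (V n)) p| ≤ B → |S (H (V n)) p - V n p| ≤ 2 * B * r ^ n →
      V (n + 1) p = S (H (V n)) p := by
    intro n p h1 h2
    rw [abs_le] at h1 h2
    rw [hVs]
    simp only [step]
    rw [min_eq_right (le_min (by linarith) h1.2), max_eq_right (max_le (by linarith) h1.1)]
  have hae : ∀ n, ∀ᵐ p ∂(volume.restrict (QT Ω T)), V (n + 1) p = S (H (V n)) p := by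
    intro n
    induction n with
    | zero =>
      filter_upwards [hS2 _ (hHB _ (hVB 0))] with p hp
      refine hstep 0 p hp ?_
      simp only [hV0, sub_zero, pow_zero, mul_one] at hp ⊢
      linarith
    | succ n ih =>
      filter_upwards [ih, hS2 _ (hHB _ (hVB (n + 1))), hS3 (H (V (n + 1))) (H (V n))
        (2 * B * r ^ (n + 1)) (hHB _ (hVB (n + 1))) (hHB _ (hVB n)) (fun p => by
          refine (hHL _ _ p).trans ?_
          calc _ ≤ r * (2 * B * r ^ n) := mul_le_mul_of_nonneg_left (hVd n p) hr0
            _ = _ := by ring)] with p h1 h2 h3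
      refine hstep (n + 1) p h2 ?_
      rw [h1]; exact h3
  have hcau : ∀ p, ∃ l, Tendsto (fun n => V n p) atTop (𝓝 l) := by
    intro p
    refine cauchySeq_tendsto_of_complete (cauchySeq_of_le_geometric r (2 * B) hr1 fun n => ?_)
    rw [dist_comm, Real.dist_eq]
    exact hVd n p
  choose v hv using hcau
  have hvm : Measurable v := measurable_of_tendsto_metrizable hVm (tendsto_pi_nhds.2 hv)
  have hvB : ∀ p, |v p| ≤ B := fun p =>
    le_of_tendsto (hv p).abs (Eventually.of_forall fun n => hVB n p)
  refine ⟨v, hvm, hvB, fun ζ hζ => ?_⟩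
  have hcont : Continuous fun p : Euc N × ℝ => ζ p.1 p.2 := hζ.1.1
  have hch := hζ.1.cont_heat
  have hcF : Continuous fun p : Euc N × ℝ => - heatAdj ζ p + lam * ζ p.1 p.2 := by fun_prop
  have hHlim : ∀ p, Tendsto (fun n => H (V n) p) atTop (𝓝 (H v p)) := by
    intro p
    rw [tendsto_iff_dist_tendsto_zero]
    have : Tendsto (fun n => r * |V n p - v p|) atTop (𝓝 (r * 0)) := by
      refine Tendsto.const_mul r ?_
      have := tendsto_iff_dist_tendsto_zero.1 (hv p)
      simpa [Real.dist_eq] using this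
    rw [mul_zero] at this
    exact squeeze_zero (fun _ => dist_nonneg) (fun n => hHL _ _ p) this
  have l1 := dct_QT hΩb T hcF (fun n => hVm (n + 1)) (fun n => hVB (n + 1))
    (w := v) (fun p => (hv p).comp (tendsto_add_atTop_nat 1))
  have l2 := dct_QT hΩb T hcont (fun n => hHm _ (hVm n)) (fun n => hHB _ (hVB n)) hHlim
  have l3 : ∀ n, ∫ p in QT Ω T, (- heatAdj ζ p + lam * ζ p.1 p.2) * V (n + 1) p =
      (∫ x in Ω, f x * ζ x 0) + lam * ∫ p in QT Ω T, ζ p.1 p.2 * H (V n) p := by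
    intro n
    rw [← hS4 _ (hHm _ (hVm n)) (hHB _ (hVB n)) ζ hζ]
    refine integral_congr_ae ?_
    filter_upwards [hae n] with p hp
    rw [hp]
  simp only [l3] at l1
  have l4 := tendsto_nhds_unique l1 (((l2.const_mul lam).const_add _))
  have i1 := bdd_int hΩb T hcF hvm hvB
  have i2 := bdd_int hΩb T hcont (hHm _ hvm) (hHB _ hvB)
  have l5 : (∫ p in QT Ω T, ((- heatAdj ζ p + lam * ζ p.1 p.2) * v p -
      lam * (ζ p.1 p.2 * H v p))) = ∫ x in Ω, f x * ζ x 0 := by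
    rw [integral_sub i1 (i2.const_mul lam), integral_const_mul, l4]
    ring
  rw [← l5]
  congr 1
  funext p
  simp only [hH]
  field_simp
  rw [hlamdef]
  ring

end

section
variable {N : ℕ}

theorem lip_approx (q : ℝ → ℝ) (hm : Monotone q) (huc : UniformContinuous q)
    (h0 : ∀ x ≤ 0, q x = 0) {M : ℝ} (hM : ∀ x, q x ≤ M) {ε : ℝ} (hε : 0 < ε) :
    ∃ κ ≥ 0, ∃ q' : ℝ → ℝ, Monotone q' ∧ (∀ a b, |q' a - q' b| ≤ κ * |a - b|) ∧ q' 0 = 0 ∧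
      ∀ x, |q' x - q x| ≤ ε := by
  have hq0 : ∀ x, 0 ≤ q x := by
    intro x
    rcases le_total x 0 with h | h
    · rw [h0 x h]
    · rw [← h0 0 le_rfl]; exact hm h
  have hM0 : 0 ≤ M := (hq0 0).trans (hM 0)
  obtain ⟨δ, hδ, hd⟩ := Metric.uniformContinuous_iff.1 huc ε hε
  set κ := M / δ with hκ
  have hκ0 : 0 ≤ κ := by positivity
  have hbd : ∀ x, BddBelow (range fun h : ℝ => q (x + h) + κ * |h|) := by
    intro x
    refine ⟨0, ?_⟩
    rintro _ ⟨h, rfl⟩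
    have := hq0 (x + h)
    positivity
  set q' : ℝ → ℝ := fun x => ⨅ h : ℝ, (q (x + h) + κ * |h|) with hq'
  have hle : ∀ x h, q' x ≤ q (x + h) + κ * |h| := fun x h => ciInf_le (hbd x) h
  have hlip : ∀ a b, q' a - q' b ≤ κ * |a - b| := by
    intro a b
    rw [sub_le_comm]
    refine le_ciInf fun h => ?_
    have := hle a (b - a + h)
    have e : a + (b - a + h) = b + h := by ring
    rw [e] at this
    have h2 : |b - a + h| ≤ |a - b| + |h| := by
      rw [abs_sub_comm a b]; exact abs_add_le _ _
    nlinarith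
  refine ⟨κ, hκ0, q', ?_, ?_, ?_, ?_⟩
  · intro a b hab
    refine le_ciInf fun h => (hle a h).trans ?_
    have := hm (show a + h ≤ b + h by linarith)
    linarith
  · intro a b
    rw [abs_le]
    have := hlip b a
    rw [abs_sub_comm] at this
    constructor <;> linarith [hlip a b]
  · apply le_antisymm
    · have := hle 0 0
      simpa [h0 0 le_rfl] using this
    · refine le_ciInf fun h => ?_
      have := hq0 (0 + h)
      positivity
  · intro x
    rw [abs_le]
    constructor
    · have : q x - ε ≤ q' x := by
        refine le_ciInf fun h => ?_
        by_cases hh : |h| < δ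
        · have := hd (a := x + h) (b := x) (by rw [Real.dist_eq]; simpa using hh)
          rw [Real.dist_eq] at this
          have := (abs_lt.1 this).1
          have : 0 ≤ κ * |h| := by positivity
          linarith
        · push Not at hh
          have : M ≤ κ * |h| := by
            calc M = κ * δ := by rw [hκ]; field_simp
              _ ≤ _ := mul_le_mul_of_nonneg_left hh hκ0
          linarith [hM x, hq0 (x + h)]
      linarith
    · have := hle x 0
      simp only [add_zero, abs_zero, mul_zero] at this
      linarith

/-- time weight -/
def Et (t : ℝ) : ℝ := Real.exp (max t 0)

theorem Et_cont : Continuous Et := by unfold Et; fun_prop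
theorem Et_pos (t : ℝ) : 0 < Et t := Real.exp_pos _
theorem Et_one (t : ℝ) : 1 ≤ Et t := Real.one_le_exp (le_max_right _ _)

/-- bounded solution of the shifted equation -/
def Sol (Ω : Set (Euc N)) (T : ℝ) (f : Euc N → ℝ) (q : ℝ → ℝ) (V : Euc N × ℝ → ℝ) : Prop :=
  Measurable V ∧ (∃ C, ∀ p, |V p| ≤ C) ∧ ∀ ζ, TestZero Ω T ζ →
    ∫ p in QT Ω T, ((- heatAdj ζ p + ζ p.1 p.2) * V p +
      ζ p.1 p.2 * ((Et p.2)⁻¹ * q (Et p.2 * V p))) = ∫ x in Ω, f x * ζ x 0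

theorem wt_lip {κ : ℝ} {q : ℝ → ℝ} (hL : ∀ a b, |q a - q b| ≤ κ * |a - b|) (t a b c : ℝ) :
    |(Et t)⁻¹ * (q (Et t * (c + a)) - q (Et t * (c + b)))| ≤ κ * |a - b| := by
  have h := hL (Et t * (c + a)) (Et t * (c + b))
  have e : Et t * (c + a) - Et t * (c + b) = Et t * (a - b) := by ring
  rw [e, abs_mul, abs_of_pos (Et_pos t)] at h
  rw [abs_mul, abs_of_pos (inv_pos.2 (Et_pos t))]
  calc _ ≤ (Et t)⁻¹ * (κ * (Et t * |a - b|)) :=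
        mul_le_mul_of_nonneg_left h (inv_pos.2 (Et_pos t)).le
    _ = _ := by have := (Et_pos t).ne'; field_simp

theorem wt_meas {q : ℝ → ℝ} (hm : Monotone q) {V : Euc N × ℝ → ℝ} (hV : Measurable V) :
    Measurable fun p : Euc N × ℝ => (Et p.2)⁻¹ * q (Et p.2 * V p) := by
  have hE : Measurable fun p : Euc N × ℝ => Et p.2 := (Et_cont.comp continuous_snd).measurable
  exact hE.inv.mul (hm.measurable.comp (hE.mul hV))

theorem sol_base {Ω : Set (Euc N)} (hΩo : IsOpen Ω) (hΩb : Bornology.IsBounded Ω) {T : ℝ}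
    (hT : 0 < T) {κ : ℝ} (hκ : 0 ≤ κ) {q : ℝ → ℝ} (hm : Monotone q)
    (hL : ∀ a b, |q a - q b| ≤ κ * |a - b|) (h0 : q 0 = 0) {B : ℝ} (hB : 0 < B)
    {f : Euc N → ℝ} (hf : Measurable f) (hfB : ∀ x, |f x| ≤ B) :
    ∃ V, Sol Ω T f q V ∧ ∀ p, |V p| ≤ B := by
  obtain ⟨v, hv, hvB, h⟩ := lemE hΩo hΩb hT hκ (fun p z => (Et p.2)⁻¹ * q (Et p.2 * z))
    (fun p a b hab => mul_le_mul_of_nonneg_left (hm (mul_le_mul_of_nonneg_left hab (Et_pos _).le))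
      (inv_pos.2 (Et_pos _)).le)
    (fun p a b => by
      have := wt_lip hL p.2 a b 0
      simpa [mul_sub] using this)
    (fun p => by simp [h0])
    (fun v hv => wt_meas hm hv) hB f hf hfB (fun _ => 0) measurable_const (fun _ => by simp [hB.le])
  refine ⟨v, ⟨hv, ⟨B, hvB⟩, fun ζ hζ => ?_⟩, hvB⟩
  rw [← h ζ hζ]
  congr 1
  funext p
  ring

theorem sol_step {Ω : Set (Euc N)} (hΩo : IsOpen Ω) (hΩb : Bornology.IsBounded Ω) {T : ℝ}
    (hT : 0 < T) {κ κ' : ℝ} (hκ' : 0 ≤ κ') {q q' : ℝ → ℝ} (hm : Monotone q)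
    (hL : ∀ a b, |q a - q b| ≤ κ * |a - b|) (h0 : q 0 = 0) (hm' : Monotone q')
    (hL' : ∀ a b, |q' a - q' b| ≤ κ' * |a - b|) {η : ℝ} (hη : 0 < η)
    (hqq : ∀ x, |q x - q' x| ≤ η) (hκ : 0 ≤ κ)
    {f : Euc N → ℝ} {V : Euc N × ℝ → ℝ} (hV : Sol Ω T f q V) :
    ∃ V', Sol Ω T f q' V' ∧ ∀ p, |V' p - V p| ≤ η := by
  obtain ⟨hVm, ⟨C, hC⟩, hVe⟩ := hV
  have hGme : ∀ v : Euc N × ℝ → ℝ, Measurable v → Measurable fun p =>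
      (Et p.2)⁻¹ * (q' (Et p.2 * (V p + v p)) - q' (Et p.2 * (V p + 0))) := by
    intro v hv
    have h1 := wt_meas hm' (hVm.add hv)
    have h2 := wt_meas hm' (hVm.add_const 0)
    simp only [mul_sub]
    exact h1.sub h2
  have hem : Measurable fun p : Euc N × ℝ =>
      (Et p.2)⁻¹ * (q (Et p.2 * V p) - q' (Et p.2 * V p)) := by
    simp only [mul_sub]
    exact (wt_meas hm hVm).sub (wt_meas hm' hVm)
  have heB : ∀ p : Euc N × ℝ, |(Et p.2)⁻¹ * (q (Et p.2 * V p) - q' (Et p.2 * V p))| ≤ η := by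
    intro p
    rw [abs_mul, abs_of_pos (inv_pos.2 (Et_pos _))]
    calc _ ≤ 1 * η := mul_le_mul (inv_le_one_of_one_le₀ (Et_one _)) (hqq _) (abs_nonneg _)
          zero_le_one
      _ = η := one_mul _
  obtain ⟨z, hz, hzB, h⟩ := lemE hΩo hΩb hT hκ'
    (fun p z => (Et p.2)⁻¹ * (q' (Et p.2 * (V p + z)) - q' (Et p.2 * (V p + 0))))
    (fun p a b hab => mul_le_mul_of_nonneg_left (sub_le_sub_right
      (hm' (mul_le_mul_of_nonneg_left (by linarith) (Et_pos _).le)) _)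
      (inv_pos.2 (Et_pos _)).le)
    (fun p a b => by
      have := wt_lip hL' p.2 a b (V p)
      rw [← mul_sub, sub_sub_sub_cancel_right]
      exact this)
    (fun p => by simp)
    hGme hη (fun _ => 0) measurable_const (fun _ => by simp [hη.le]) _ hem heB
  refine ⟨fun p => V p + z p, ⟨hVm.add hz, ⟨C + η, fun p => ?_⟩, fun ζ hζ => ?_⟩, fun p => ?_⟩
  · exact (abs_add_le _ _).trans (add_le_add (hC p) (hzB p))
  · have e1 := h ζ hζ
    have e2 := hVe ζ hζ
    have hcont : Continuous fun p : Euc N × ℝ => ζ p.1 p.2 := hζ.1.1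
    have hch := hζ.1.cont_heat
    have hcF : Continuous fun p : Euc N × ℝ => - heatAdj ζ p + ζ p.1 p.2 := by fun_prop
    have i1 := bdd_int hΩb T hcF hVm hC
    have i2 := bdd_int hΩb T hcont (wt_meas hm hVm) (C := κ * C) (fun p => by
      have := wt_lip hL p.2 (V p) 0 0
      simp only [zero_add, mul_zero, h0, sub_zero] at this
      exact this.trans (mul_le_mul_of_nonneg_left (hC p) hκ))
    have i3 := bdd_int hΩb T hcF hz hzB
    have i4 := bdd_int hΩb T hcont (hGme z hz) (C := κ' * η) (fun p => by
      have := wt_lip hL' p.2 (z p) 0 (V p)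
      rw [sub_zero] at this
      exact this.trans (mul_le_mul_of_nonneg_left (hzB p) hκ'))
    have i5 := bdd_int hΩb T hcont hem heB
    have i6 : IntegrableOn (fun p => z p * (- heatAdj ζ p + ζ p.1 p.2)) (QT Ω T) := by
      simpa [mul_comm] using i3
    have e3 := integral_add (i1.add i2) ((i6.add i4).sub i5)
    simp only [Pi.add_apply, Pi.sub_apply] at e3
    rw [e2, e1] at e3
    simp only [zero_mul, integral_zero, add_zero] at e3
    rw [← e3]
    congr 1
    funext p
    simp only [add_zero]
    ring
  · rw [add_sub_cancel_left]; exact hzB p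

end

section
variable {N : ℕ}

theorem sol_lim {Ω : Set (Euc N)} (hΩo : IsOpen Ω) (hΩb : Bornology.IsBounded Ω) {T : ℝ}
    (hT : 0 < T) {q : ℝ → ℝ} (hm : Monotone q) (huc : UniformContinuous q)
    (h0 : ∀ x ≤ 0, q x = 0) {K : ℝ} (hK : ∀ x, q x ≤ K) {B : ℝ} (hB : 0 < B)
    {f : Euc N → ℝ} (hf : Measurable f) (hfB : ∀ x, |f x| ≤ B) :
    ∃ V, Sol Ω T f q V ∧ ∀ p, |V p| ≤ B + 1 := by
  have hq0 : ∀ x, 0 ≤ q x := by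
    intro x
    rcases le_total x 0 with h | h
    · rw [h0 x h]
    · rw [← h0 0 le_rfl]; exact hm h
  choose κ hκ Q hQm hQL hQ0 hQ using fun k : ℕ => lip_approx q hm huc h0 hK
    (ε := (1 / 2 : ℝ) ^ (k + 2)) (by positivity)
  have hQQ : ∀ k x, |Q k x - Q (k + 1) x| ≤ (1 / 2 : ℝ) ^ (k + 1) := by
    intro k x
    have h1 := hQ k x
    have h2 := hQ (k + 1) x
    have e1 : (1 / 2 : ℝ) ^ (k + 1 + 2) ≤ (1 / 2 : ℝ) ^ (k + 2) :=
      pow_le_pow_of_le_one (by norm_num) (by norm_num) (by omega)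
    have e2 : (1 / 2 : ℝ) ^ (k + 1) = 2 * (1 / 2 : ℝ) ^ (k + 2) := by ring
    rw [abs_le] at *
    constructor <;> linarith
  obtain ⟨V0, hV0, hV0B⟩ := sol_base hΩo hΩb hT (hκ 0) (hQm 0) (hQL 0) (hQ0 0) hB hf hfB
  have hstep : ∀ (k : ℕ) (V : Euc N × ℝ → ℝ), Sol Ω T f (Q k) V →
      ∃ V', Sol Ω T f (Q (k + 1)) V' ∧ ∀ p, |V' p - V p| ≤ (1 / 2 : ℝ) ^ (k + 1) := fun k V hV =>
    sol_step hΩo hΩb hT (hκ (k + 1)) (hQm k) (hQL k) (hQ0 k) (hQm (k + 1)) (hQL (k + 1))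
      (by positivity) (hQQ k) (hκ k) hV
  choose! nx hnx1 hnx2 using hstep
  let V : ℕ → (Euc N × ℝ → ℝ) := fun n => Nat.rec V0 nx n
  have hVs : ∀ n, V (n + 1) = nx n (V n) := fun n => rfl
  have hVS : ∀ n, Sol Ω T f (Q n) (V n) := by
    intro n
    induction n with
    | zero => exact hV0
    | succ n ih => rw [hVs]; exact hnx1 n _ ih
  have hVd : ∀ n p, |V (n + 1) p - V n p| ≤ (1 / 2 : ℝ) ^ (n + 1) := fun n p => by
    rw [hVs]; exact hnx2 n _ (hVS n) p
  have hVB' : ∀ n p, |V n p| ≤ B + 1 - (1 / 2 : ℝ) ^ n := by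
    intro n p
    induction n with
    | zero =>
      have : |V 0 p| ≤ B := hV0B p
      simpa using this
    | succ n ih =>
      have h1 := hVd n p
      have e : (1 / 2 : ℝ) ^ n = 2 * (1 / 2 : ℝ) ^ (n + 1) := by ring
      rw [abs_le] at *
      constructor <;> linarith
  have hVB : ∀ n p, |V n p| ≤ B + 1 := fun n p => (hVB' n p).trans (by
    have : (0:ℝ) ≤ (1 / 2 : ℝ) ^ n := by positivity
    linarith)
  have hcau : ∀ p, ∃ l, Tendsto (fun n => V n p) atTop (𝓝 l) := by
    intro p
    refine cauchySeq_tendsto_of_complete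
      (cauchySeq_of_le_geometric (1 / 2) (1 / 2) (by norm_num) fun n => ?_)
    rw [dist_comm, Real.dist_eq]
    refine (hVd n p).trans (le_of_eq ?_)
    ring
  choose v hv using hcau
  have hVm := fun n => (hVS n).1
  have hvm : Measurable v := measurable_of_tendsto_metrizable hVm (tendsto_pi_nhds.2 hv)
  have hvB : ∀ p, |v p| ≤ B + 1 := fun p =>
    le_of_tendsto (hv p).abs (Eventually.of_forall fun n => hVB n p)
  refine ⟨v, ⟨hvm, ⟨_, hvB⟩, fun ζ hζ => ?_⟩, hvB⟩
  have hcont : Continuous fun p : Euc N × ℝ => ζ p.1 p.2 := hζ.1.1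
  have hch := hζ.1.cont_heat
  have hcF : Continuous fun p : Euc N × ℝ => - heatAdj ζ p + ζ p.1 p.2 := by fun_prop
  have hQlim : ∀ p : Euc N × ℝ, Tendsto (fun n => (Et p.2)⁻¹ * Q n (Et p.2 * V n p)) atTop
      (𝓝 ((Et p.2)⁻¹ * q (Et p.2 * v p))) := by
    intro p
    refine Tendsto.const_mul _ ?_
    have h1 : Tendsto (fun n => q (Et p.2 * V n p)) atTop (𝓝 (q (Et p.2 * v p))) :=
      (huc.continuous.tendsto _).comp ((hv p).const_mul _)
    have h2 : Tendsto (fun n => Q n (Et p.2 * V n p) - q (Et p.2 * V n p)) atTop (𝓝 0) := by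
      refine squeeze_zero_norm (fun n => hQ n _) ?_
      exact (tendsto_add_atTop_iff_nat 2).2
        (tendsto_pow_atTop_nhds_zero_of_lt_one (by norm_num) (by norm_num))
    have := h2.add h1
    simpa using this
  have hQb : ∀ n (p : Euc N × ℝ), |(Et p.2)⁻¹ * Q n (Et p.2 * V n p)| ≤ K + 1 := by
    intro n p
    rw [abs_mul, abs_of_pos (inv_pos.2 (Et_pos _))]
    have h1 := hQ n (Et p.2 * V n p)
    have h2 : (1 / 2 : ℝ) ^ (n + 2) ≤ 1 := pow_le_one₀ (by norm_num) (by norm_num)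
    have h3 := hK (Et p.2 * V n p)
    have h4 := hq0 (Et p.2 * V n p)
    have h5 : |Q n (Et p.2 * V n p)| ≤ K + 1 := by
      rw [abs_le] at *
      constructor <;> linarith
    calc _ ≤ 1 * (K + 1) := mul_le_mul (inv_le_one_of_one_le₀ (Et_one _)) h5 (abs_nonneg _)
          zero_le_one
      _ = _ := one_mul _
  have l1 := dct_QT hΩb T hcF hVm hVB hv
  have l2 := dct_QT hΩb T hcont (fun n => wt_meas (hQm n) (hVm n)) hQb hQlim
  have i1 := fun n => bdd_int hΩb T hcF (hVm n) (hVB n)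
  have i2 := fun n => bdd_int hΩb T hcont (wt_meas (hQm n) (hVm n)) (hQb n)
  have j1 := bdd_int hΩb T hcF hvm hvB
  have j2 := bdd_int hΩb T hcont (wt_meas hm hvm) (C := K + 1) (fun p =>
    le_of_tendsto (hQlim p).abs (Eventually.of_forall fun n => hQb n p))
  rw [integral_add j1 j2]
  refine tendsto_nhds_unique (l1.add l2) ?_
  refine tendsto_const_nhds.congr fun n => ?_
  rw [← integral_add (i1 n) (i2 n)]
  exact ((hVS n).2.2 ζ hζ).symm

theorem exp_test {Ω : Set (Euc N)} {T : ℝ} {ζ : Euc N → ℝ → ℝ} (h : TestZero Ω T ζ) :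
    TestZero Ω T (fun x t => Real.exp t * ζ x t) ∧
    ∀ p, heatAdj (fun x t => Real.exp t * ζ x t) p =
      Real.exp p.2 * ζ p.1 p.2 + Real.exp p.2 * heatAdj ζ p := by
  obtain ⟨⟨h1, h2, h3, h4, h5, h6, h7⟩, hb, hf⟩ := h
  have d1 : ∀ x t, HasDerivAt (fun t => Real.exp t * ζ x t)
      (Real.exp t * ζ x t + Real.exp t * deriv (ζ x) t) t := fun x t =>
    (Real.hasDerivAt_exp t).mul (h2 x t).hasDerivAt
  have d2 : ∀ t x, HasFDerivAt (fun y => Real.exp t * ζ y t)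
      (Real.exp t • fderiv ℝ (fun y => ζ y t) x) x := fun t x =>
    (h4 t x).hasFDerivAt.const_mul _
  have d2' : ∀ t, (fun y => fderiv ℝ (fun y => Real.exp t * ζ y t) y) =
      fun y => Real.exp t • fderiv ℝ (fun y => ζ y t) y := fun t => by
    funext y; exact (d2 t y).fderiv
  have d3 : ∀ t x, HasFDerivAt (fun y => fderiv ℝ (fun y => Real.exp t * ζ y t) y)
      (Real.exp t • fderiv ℝ (fun y => fderiv ℝ (fun y => ζ y t) y) x) x := fun t x => by
    rw [d2']
    exact (h6 t x).hasFDerivAt.const_smul (Real.exp t)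
  have hC : C21 (fun x t => Real.exp t * ζ x t) := by
    refine ⟨?_, fun x t => (d1 x t).differentiableAt, ?_, fun t x => (d2 t x).differentiableAt, ?_,
      fun t x => (d3 t x).differentiableAt, ?_⟩
    · fun_prop
    · simp only [fun p : Euc N × ℝ => (d1 p.1 p.2).deriv]
      fun_prop
    · simp only [fun p : Euc N × ℝ => (d2 p.2 p.1).fderiv]
      fun_prop
    · simp only [fun p : Euc N × ℝ => (d3 p.2 p.1).fderiv]
      fun_prop
  refine ⟨⟨hC, fun x hx t ht => by simp [hb x hx t ht], fun x hx => by simp [hf x hx]⟩, ?_⟩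
  intro p
  have hC0 : C21 ζ := ⟨h1, h2, h3, h4, h5, h6, h7⟩
  rw [heatAdj, heatAdj, (d1 p.1 p.2).deriv, hC.lap_eq, hC0.lap_eq, (d3 p.2 p.1).fderiv, mul_add,
    Finset.mul_sum, ← add_assoc]
  rfl

theorem good_bdd {Ω : Set (Euc N)} (hΩo : IsOpen Ω) (hΩb : Bornology.IsBounded Ω) {T : ℝ}
    (hT : 0 < T) {g : ℝ → ℝ} (hg : GoodG g) {B : ℝ} (hB : 0 < B)
    {f : Euc N → ℝ} (hf : Measurable f) (hf0 : ∀ x, 0 ≤ f x) (hfB : ∀ x, f x ≤ B) :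
    GoodMeasure Ω T g ((volume.restrict Ω).withDensity fun x => ENNReal.ofReal (f x)) := by
  obtain ⟨hgc, hgm, hg0⟩ := hg
  set R : ℝ := Real.exp T * (B + 1) with hR
  have hR0 : 0 ≤ R := by positivity
  set cl : ℝ → ℝ := fun x => max 0 (min x R) with hcl
  have hclm : Monotone cl := fun a b hab => max_le_max le_rfl (min_le_min hab le_rfl)
  have hcl_mem : ∀ x, cl x ∈ Icc 0 R := fun x => ⟨le_max_left _ _, max_le hR0 (min_le_right _ _)⟩
  have hclL : ∀ a b, |cl a - cl b| ≤ |a - b| := by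
    intro a b
    refine (abs_max_sub_max_le_max 0 (min a R) 0 (min b R)).trans ?_
    rw [sub_self, abs_zero]
    refine max_le (abs_nonneg _) ?_
    refine (abs_min_sub_min_le_max a R b R).trans ?_
    rw [sub_self, abs_zero]
    exact max_le le_rfl (abs_nonneg _)
  have huc : UniformContinuous (g ∘ cl) := by
    rw [Metric.uniformContinuous_iff]
    intro ε hε
    obtain ⟨δ, hδ, h⟩ := Metric.uniformContinuousOn_iff.1
      (isCompact_Icc.uniformContinuousOn_of_continuous hgc.continuousOn : UniformContinuousOn g (Icc 0 R)) ε hε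
    refine ⟨δ, hδ, fun {a b} hab => h _ (hcl_mem a) _ (hcl_mem b) ?_⟩
    exact (hclL a b).trans_lt hab
  have hcleq : ∀ x ≤ R, g (cl x) = g x := by
    intro x hx
    simp only [hcl]
    rw [min_eq_left hx]
    rcases le_total x 0 with h | h
    · rw [max_eq_left h, hg0 0 le_rfl, hg0 x h]
    · rw [max_eq_right h]
  obtain ⟨V, ⟨hVm, _, hVe⟩, hVB⟩ := sol_lim hΩo hΩb hT (hgm.comp hclm) huc
    (fun x hx => by simp only [Function.comp]; rw [hcleq x (hx.trans hR0), hg0 x hx])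
    (K := g R) (fun x => hgm (hcl_mem x).2) hB hf
    (fun x => by rw [abs_of_nonneg (hf0 x)]; exact hfB x)
  have hEt : ∀ p ∈ QT Ω T, Et p.2 = Real.exp p.2 := by
    intro p hp
    rw [Et, max_eq_left hp.2.1.le]
  have hu : ∀ p ∈ QT Ω T, Et p.2 * V p ≤ R := by
    intro p hp
    rw [hEt p hp, hR]
    have h1 : Real.exp p.2 ≤ Real.exp T := Real.exp_le_exp.2 hp.2.2.le
    have h2 := le_of_abs_le (hVB p)
    calc _ ≤ Real.exp p.2 * (B + 1) := mul_le_mul_of_nonneg_left h2 (Real.exp_pos _).le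
      _ ≤ _ := mul_le_mul_of_nonneg_right h1 (by positivity)
  have hEc : Continuous fun p : Euc N × ℝ => Et p.2 := Et_cont.comp continuous_snd
  have hQm := QT_meas hΩo T
  refine ⟨fun p => Et p.2 * V p, bdd_int hΩb T hEc hVm hVB, ?_, ?_⟩
  · have hrc : Continuous fun p : Euc N × ℝ => rho Ω p.1 :=
      (Metric.continuous_infDist_pt _).comp continuous_fst
    have hmm : Measurable fun p : Euc N × ℝ => g (cl (Et p.2 * V p)) :=
      (hgm.comp hclm).measurable.comp (hEc.measurable.mul hVm)
    have hb : ∀ p : Euc N × ℝ, |g (cl (Et p.2 * V p))| ≤ g R := fun p => by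
      have h1 := hgm (hcl_mem (Et p.2 * V p)).1
      rw [hg0 0 le_rfl] at h1
      rw [abs_of_nonneg h1]
      exact hgm (hcl_mem _).2
    refine (bdd_int hΩb T hrc hmm hb).congr_fun (fun p hp => ?_) hQm
    simp only
    rw [hcleq _ (hu p hp), mul_comm]
  · intro ζ hζ
    obtain ⟨hξ, hh⟩ := exp_test hζ
    have e := hVe _ hξ
    have er : ∫ x, ζ x 0 ∂((volume.restrict Ω).withDensity fun x => ENNReal.ofReal (f x)) =
        ∫ x in Ω, f x * (Real.exp 0 * ζ x 0) := by
      rw [integral_withDensity_eq_integral_toReal_smul (by fun_prop)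
        (Eventually.of_forall fun x => ENNReal.ofReal_lt_top)]
      simp only [ENNReal.toReal_ofReal (hf0 _), Real.exp_zero, one_mul, smul_eq_mul]
    rw [er, ← e]
    refine setIntegral_congr_fun hQm fun p hp => ?_
    simp only [hh, hEt p hp, Function.comp]
    have hu' := hu p hp
    rw [hEt p hp] at hu'
    rw [hcleq _ hu', heatAdj]
    have := (Real.exp_pos p.2).ne'
    field_simp
    ring

end

theorem memM1_sigma {N : ℕ} {Ω : Set (Euc N)} (hΩo : IsOpen Ω) (hΩb : Bornology.IsBounded Ω)
    {μ : Measure (Euc N)} (hμ : MemM1 Ω μ) : SigmaFinite μ := by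
  obtain ⟨F, hF1, hF2, hF3, _⟩ := hΩo.exists_iUnion_isClosed
  refine ⟨⟨⟨fun n => F n ∪ Ωᶜ, fun _ => trivial, fun n => ?_, ?_⟩⟩⟩
  · refine (measure_union_le _ _).trans_lt ?_
    rw [hμ.1, add_zero]
    exact hμ.2.1 _ (hF2 n) (Metric.isCompact_of_isClosed_isBounded (hF1 n) (hΩb.subset (hF2 n)))
  · rw [← iUnion_union, hF3, union_compl_self]

theorem haus_null {N : ℕ} {E : Set (Euc N)} (hE : volume E = 0) : hausN E = 0 := by
  have hi := isAddHaarMeasure_hausdorffMeasure (E := Euc N)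
  rw [finrank_euclideanSpace_fin] at hi
  unfold hausN
  exact Measure.absolutelyContinuous_isAddHaarMeasure _ volume hE

theorem stmt_aux {N : ℕ} (Ω : Set (Euc N)) (hΩo : IsOpen Ω)
    (hΩb : Bornology.IsBounded Ω) (T : ℝ) (hT : 0 < T)
    (g : ℝ → ℝ) (hg : GoodG g) (μ μstar : Measure (Euc N)) (hμ : MemM1 Ω μ)
    (hred : IsReducedMeasure Ω T g μ μstar) :
    ∃ E : Set (Euc N), MeasurableSet E ∧ E ⊆ Ω ∧ hausN E = 0 ∧
      ∀ A : Set (Euc N), MeasurableSet A → A ⊆ Ω \ E → μ A = μstar A := by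
  have hσ := memM1_sigma hΩo hΩb hμ
  obtain ⟨_, hle, _, hmax⟩ := hred
  have hdec := Measure.haveLebesgueDecomposition_add μ (volume : Measure (Euc N))
  have hφm : Measurable (μ.rnDeriv volume) := Measure.measurable_rnDeriv μ volume
  set φ := μ.rnDeriv volume with hφ
  obtain ⟨s, hs, hs1, hs2⟩ := Measure.mutuallySingular_singularPart μ (volume : Measure (Euc N))
  have hνle : ∀ n : ℕ, (volume.restrict Ω).withDensity (fun x => min (φ x) ((n : ℝ≥0∞) + 1)) ≤ μ := by
    intro n
    have h1 : (volume.restrict Ω).withDensity (fun x => min (φ x) ((n : ℝ≥0∞) + 1)) ≤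
        (volume.restrict Ω).withDensity φ :=
      withDensity_mono (Eventually.of_forall fun x => min_le_left _ _)
    have h2 : (volume.restrict Ω).withDensity φ ≤ volume.withDensity φ := by
      rw [← restrict_withDensity hΩo.measurableSet]
      exact Measure.restrict_le_self
    have h3 : volume.withDensity φ ≤ μ := by
      conv_rhs => rw [hdec]
      exact Measure.le_add_left le_rfl
    exact h1.trans (h2.trans h3)
  have hνs : ∀ n : ℕ, (volume.restrict Ω).withDensity (fun x => min (φ x) ((n : ℝ≥0∞) + 1)) ≤
      μstar := by
    intro n
    have hnt : ∀ x, min (φ x) ((n : ℝ≥0∞) + 1) ≠ ⊤ := fun x =>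
      ne_top_of_le_ne_top (by finiteness) (min_le_right _ _)
    refine hmax _ ⟨?_, fun K hK hKc => ?_, ?_⟩ ?_ (hνle n)
    · rw [withDensity_apply _ hΩo.measurableSet.compl, Measure.restrict_restrict
        hΩo.measurableSet.compl, compl_inter_self]
      simp
    · exact (hνle n K).trans_lt (hμ.2.1 K hK hKc)
    · exact (lintegral_mono' (hνle n) le_rfl).trans_lt hμ.2.2
    · have := good_bdd hΩo hΩb hT hg (B := n + 1) (by positivity)
        (f := fun x => (min (φ x) ((n : ℝ≥0∞) + 1)).toReal)
        (hφm.min measurable_const).ennreal_toReal (fun x => ENNReal.toReal_nonneg)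
        (fun x => by
          have := ENNReal.toReal_mono (by finiteness) (min_le_right (φ x) ((n : ℝ≥0∞) + 1))
          refine this.trans (le_of_eq ?_)
          rw [ENNReal.toReal_add (by finiteness) (by finiteness)]
          simp)
      simpa only [ENNReal.ofReal_toReal (hnt _)] using this
  refine ⟨sᶜ ∩ Ω, hs.compl.inter hΩo.measurableSet, inter_subset_right,
    haus_null (measure_mono_null inter_subset_left hs2), fun A hA hAs => ?_⟩
  refine le_antisymm ?_ (hle A)
  have hAΩ : A ⊆ Ω := fun x hx => (hAs hx).1
  have hAs' : A ⊆ s := fun x hx => by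
    by_contra hc
    exact (hAs hx).2 ⟨hc, hAΩ hx⟩
  have e1 : μ A = ∫⁻ x in A, φ x := by
    conv_lhs => rw [hdec]
    rw [Measure.add_apply, measure_mono_null hAs' hs1, zero_add, withDensity_apply _ hA]
  have e2 : ∀ x, φ x = ⨆ n : ℕ, min (φ x) ((n : ℝ≥0∞) + 1) := by
    intro x
    refine le_antisymm ?_ (iSup_le fun n => min_le_left _ _)
    refine le_of_forall_lt fun c hc => ?_
    obtain ⟨n, hn⟩ := ENNReal.exists_nat_gt (ne_top_of_lt hc)
    refine lt_of_lt_of_le ?_ (le_iSup (fun n : ℕ => min (φ x) ((n : ℝ≥0∞) + 1)) n)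
    exact lt_min hc (hn.trans_le le_self_add)
  rw [e1, lintegral_congr e2, lintegral_iSup (fun n => hφm.min measurable_const)
    (fun a b hab x => min_le_min le_rfl (by gcongr))]
  refine iSup_le fun n => ?_
  have := hνs n A
  rw [withDensity_apply _ hA, Measure.restrict_restrict hA, inter_eq_self_of_subset_left hAΩ] at this
  exact this

/-- **Corollary 2.15.** `μ` and its reduced measure `μ*` differ only on a Borel
set of zero `N`-dimensional Hausdorff measure. -/
theorem stmt_11 {N : ℕ} (hN : 1 ≤ N) (Ω : Set (Euc N)) (hΩo : IsOpen Ω)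
    (hΩc : IsConnected Ω) (hΩb : Bornology.IsBounded Ω) (T : ℝ) (hT : 0 < T)
    (g : ℝ → ℝ) (hg : GoodG g) (μ μstar : Measure (Euc N)) (hμ : MemM1 Ω μ)
    (hred : IsReducedMeasure Ω T g μ μstar) :
    ∃ E : Set (Euc N), MeasurableSet E ∧ E ⊆ Ω ∧ hausN E = 0 ∧
      ∀ A : Set (Euc N), MeasurableSet A → A ⊆ Ω \ E → μ A = μstar A := by
  exact stmt_aux Ω hΩo hΩb T hT g hg μ μstar hμ hred
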